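/- arXiv:2604.06329 — 8 statements merged into one kernel-verified Lean document; each statement's English description precedes it below -/
import Mathlib

section
/- In the classic General Lotto game GL(X,Y;v), the max-min and min-max values coincide and equal the equilibrium value π_GL(X,Y): sup_{F_X ∈ 𝔽(X)} inf_{F_Y ∈ 𝔽(Y)} π_X(F_X,F_Y) = inf_{F_Y ∈ 𝔽(Y)} sup_{F_X ∈ 𝔽(X)} π_X(F_X,F_Y) = π_GL(X,Y), where π_GL(X,Y) := X/(2Y) if X ≤ Y and π_GL(X,Y) := 1 − Y/(2X) if X > Y. -/
open MeasureTheory Finset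

noncomputable section

/-- Admissible strategies for a player with budget `B`: Borel probability measures on `ℝ^C`
supported (i.e. concentrated, with full measure) on the nonnegative orthant, whose expected
total allocation is at most `B`. -/
def Strat (C : ℕ) (B : ℝ) : Set (Measure (Fin C → ℝ)) :=
  {μ | IsProbabilityMeasure μ ∧ μ {x | ∀ c, 0 ≤ x c} = 1 ∧
    ∫⁻ x, ENNReal.ofReal (∑ c, x c) ∂μ ≤ ENNReal.ofReal B}

/-- Expected payoff to player `X`: `E[Σ_c v_c · 1{x_c ≥ y_c}]`. -/
def payoff (C : ℕ) (v : Fin C → ℝ) (F G : Measure (Fin C → ℝ)) : ℝ :=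
  ∫ x, (∫ y, (∑ c, if y c ≤ x c then v c else 0) ∂G) ∂F


lemma aux_f_nonneg {C : ℕ} {v : Fin C → ℝ} (hpos : ∀ c, 0 < v c) (x y : Fin C → ℝ) :
    0 ≤ ∑ c, (if y c ≤ x c then v c else 0) :=
  Finset.sum_nonneg fun c _ => by split_ifs <;> [exact (hpos c).le; exact le_rfl]

lemma aux_f_le {C : ℕ} {v : Fin C → ℝ} (hpos : ∀ c, 0 < v c) (hsum : ∑ c, v c = 1)
    (x y : Fin C → ℝ) :
    ∑ c, (if y c ≤ x c then v c else 0) ≤ 1 := by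
  rw [← hsum]
  exact Finset.sum_le_sum fun c _ => by split_ifs <;> [exact le_rfl; exact (hpos c).le]

lemma aux_f_meas {C : ℕ} (v : Fin C → ℝ) :
    Measurable (fun q : (Fin C → ℝ) × (Fin C → ℝ) =>
      ∑ c, (if q.2 c ≤ q.1 c then v c else 0)) := by
  refine Finset.measurable_sum _ fun c _ => ?_
  refine Measurable.ite ?_ measurable_const measurable_const
  exact measurableSet_le (by fun_prop) (by fun_prop)

lemma aux_inner_le {C : ℕ} {v : Fin C → ℝ} (hpos : ∀ c, 0 < v c) (hsum : ∑ c, v c = 1)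
    (G : Measure (Fin C → ℝ)) [IsProbabilityMeasure G] (x : Fin C → ℝ) :
    ∫ y, (∑ c, if y c ≤ x c then v c else 0) ∂G ≤ 1 := by
  have := integral_mono_of_nonneg (μ := G) (f := fun y => ∑ c, if y c ≤ x c then v c else 0)
    (g := fun _ => (1:ℝ)) (Filter.Eventually.of_forall fun y => aux_f_nonneg hpos x y)
    (integrable_const _) (Filter.Eventually.of_forall fun y => aux_f_le hpos hsum x y)
  simpa using this

lemma aux_payoff_nonneg {C : ℕ} {v : Fin C → ℝ} (hpos : ∀ c, 0 < v c)
    (F G : Measure (Fin C → ℝ)) : 0 ≤ payoff C v F G :=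
  integral_nonneg fun x => integral_nonneg fun y => aux_f_nonneg hpos x y

lemma aux_payoff_le {C : ℕ} {v : Fin C → ℝ} (hpos : ∀ c, 0 < v c) (hsum : ∑ c, v c = 1)
    (F G : Measure (Fin C → ℝ)) [IsProbabilityMeasure F] [IsProbabilityMeasure G] :
    payoff C v F G ≤ 1 := by
  have := integral_mono_of_nonneg (μ := F)
    (f := fun x => ∫ y, (∑ c, if y c ≤ x c then v c else 0) ∂G)
    (g := fun _ => (1:ℝ))
    (Filter.Eventually.of_forall fun x => integral_nonneg fun y => aux_f_nonneg hpos x y)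
    (integrable_const _) (Filter.Eventually.of_forall fun x => aux_inner_le hpos hsum G x)
  simpa [payoff] using this

/-- uniform measure on the unit interval -/
def unifM : Measure ℝ := volume.restrict (Set.Icc 0 1)

instance : IsProbabilityMeasure unifM := ⟨by simp [unifM]⟩

/-- mixture of zero and a uniform ray -/
def eqS {C : ℕ} (v : Fin C → ℝ) (p M : ℝ) : Measure (Fin C → ℝ) :=
  ENNReal.ofReal (1 - p) • Measure.dirac 0 +
    ENNReal.ofReal p • Measure.map (fun (u : ℝ) (c : Fin C) => M * u * v c) unifM

lemma aux_ray_meas {C : ℕ} (v : Fin C → ℝ) (M : ℝ) :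
    Measurable (fun (u : ℝ) (c : Fin C) => M * u * v c) := by fun_prop

lemma eqS_prob {C : ℕ} (v : Fin C → ℝ) {p M : ℝ} (h0 : 0 ≤ p) (h1 : p ≤ 1) :
    IsProbabilityMeasure (eqS v p M) := by
  have := Measure.isProbabilityMeasure_map (μ := unifM) (aux_ray_meas v M).aemeasurable
  constructor
  simp only [eqS, Measure.add_apply, Measure.smul_apply, measure_univ, smul_eq_mul, mul_one]
  rw [← ENNReal.ofReal_add (by linarith) h0]
  simp

lemma eqS_integral {C : ℕ} (v : Fin C → ℝ) {p M : ℝ} (h0 : 0 ≤ p) (h1 : p ≤ 1)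
    (f : (Fin C → ℝ) → ℝ) (hf : Measurable f) (hb : ∀ x, |f x| ≤ 1) :
    ∫ x, f x ∂(eqS v p M) = (1 - p) * f 0 + p * ∫ u, f (fun c => M * u * v c) ∂unifM := by
  have := Measure.isProbabilityMeasure_map (μ := unifM) (aux_ray_meas v M).aemeasurable
  have hi : ∀ (μ : Measure (Fin C → ℝ)) [IsFiniteMeasure μ], Integrable f μ := fun μ _ =>
    Integrable.of_bound hf.aestronglyMeasurable 1 (Filter.Eventually.of_forall hb)
  unfold eqS
  rw [integral_add_measure ((hi _).smul_measure ENNReal.ofReal_ne_top)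
    ((hi _).smul_measure ENNReal.ofReal_ne_top), integral_smul_measure, integral_smul_measure,
    integral_dirac, integral_map (aux_ray_meas v M).aemeasurable hf.aestronglyMeasurable,
    ENNReal.toReal_ofReal (by linarith), ENNReal.toReal_ofReal h0]
  simp

lemma unif_mean {M : ℝ} (hM : 0 ≤ M) : ∫⁻ u, ENNReal.ofReal (M * u) ∂unifM =
    ENNReal.ofReal (M / 2) := by
  unfold unifM
  rw [← ofReal_integral_eq_lintegral_ofReal]
  · congr 1
    rw [integral_Icc_eq_integral_Ioc, ← intervalIntegral.integral_of_le zero_le_one,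
      intervalIntegral.integral_const_mul, integral_id]
    ring
  · exact (Continuous.continuousOn (by fun_prop)).integrableOn_Icc
  · filter_upwards [ae_restrict_mem measurableSet_Icc] with u hu
    exact mul_nonneg hM hu.1

lemma eqS_strat {C : ℕ} {v : Fin C → ℝ} (hpos : ∀ c, 0 < v c) (hsum : ∑ c, v c = 1)
    {p M B : ℝ} (h0 : 0 ≤ p) (h1 : p ≤ 1) (hM : 0 < M) (hB : p * (M / 2) ≤ B) :
    eqS v p M ∈ Strat C B := by
  have hP := eqS_prob v (M := M) h0 h1
  have hms : MeasurableSet {x : Fin C → ℝ | ∀ c, 0 ≤ x c} := by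
    rw [Set.ofPred_forall]
    exact MeasurableSet.iInter fun c => measurableSet_le (by fun_prop) (by fun_prop)
  refine ⟨hP, ?_, ?_⟩
  · have : ∀ᵐ x ∂(eqS v p M), ∀ c, 0 ≤ x c := by
      unfold eqS
      rw [ae_add_measure_iff]
      constructor
      · apply Measure.ae_smul_measure
        rw [ae_dirac_iff hms]
        simp
      · apply Measure.ae_smul_measure
        rw [ae_map_iff (aux_ray_meas v M).aemeasurable hms]
        unfold unifM
        filter_upwards [ae_restrict_mem measurableSet_Icc] with u hu c
        exact mul_nonneg (mul_nonneg hM.le hu.1) (hpos c).le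
    exact prob_compl_eq_zero_iff hms |>.1 (by simpa [ae_iff, Set.compl_def] using this)
  · unfold eqS
    have hm : Measurable fun x : Fin C → ℝ => ENNReal.ofReal (∑ c, x c) := by fun_prop
    rw [lintegral_add_measure, lintegral_smul_measure, lintegral_smul_measure,
      lintegral_dirac' _ hm, lintegral_map hm (aux_ray_meas v M)]
    simp only [← Finset.mul_sum, hsum, mul_one]
    rw [unif_mean hM.le]
    simp only [Pi.zero_apply, Finset.sum_const_zero, ENNReal.ofReal_zero, smul_eq_mul, mul_zero, zero_add]
    rw [← ENNReal.ofReal_mul h0]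
    exact ENNReal.ofReal_le_ofReal hB

lemma strat_mean {C : ℕ} {B : ℝ} (hB : 0 ≤ B) {F : Measure (Fin C → ℝ)} (hF : F ∈ Strat C B) :
    (∀ᵐ x ∂F, ∀ c, 0 ≤ x c) ∧ Integrable (fun x : Fin C → ℝ => ∑ c, x c) F ∧
      ∫ x, ∑ c, x c ∂F ≤ B := by
  obtain ⟨hP, h1, h2⟩ := hF
  have hms : MeasurableSet {x : Fin C → ℝ | ∀ c, 0 ≤ x c} := by
    rw [Set.ofPred_forall]
    exact MeasurableSet.iInter fun c => measurableSet_le (by fun_prop) (by fun_prop)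
  have hae : ∀ᵐ x ∂F, ∀ c, 0 ≤ x c := by
    have := (prob_compl_eq_zero_iff hms).2 h1
    simpa [ae_iff, Set.compl_def] using this
  have hnn : 0 ≤ᵐ[F] fun x : Fin C → ℝ => ∑ c, x c := by
    filter_upwards [hae] with x hx
    exact Finset.sum_nonneg fun c _ => hx c
  have hm : Measurable fun x : Fin C → ℝ => ∑ c, x c := by fun_prop
  refine ⟨hae, ⟨hm.aestronglyMeasurable, ?_⟩, ?_⟩
  · rw [hasFiniteIntegral_iff_ofReal hnn]
    exact h2.trans_lt ENNReal.ofReal_lt_top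
  · rw [integral_eq_lintegral_of_nonneg_ae hnn hm.aestronglyMeasurable]
    exact ENNReal.toReal_le_of_le_ofReal hB h2

lemma unif_sum {C : ℕ} (v : Fin C → ℝ) (P : Fin C → ℝ → Prop) [∀ c u, Decidable (P c u)]
    (hP : ∀ c, MeasurableSet {u | P c u}) :
    ∫ u, (∑ c, if P c u then v c else 0) ∂unifM = ∑ c, v c * unifM.real {u | P c u} := by
  have h : ∀ c, (fun u => if P c u then v c else 0) = Set.indicator {u | P c u} fun _ => v c := by
    intro c; ext u; simp [Set.indicator]
  rw [integral_finsetSum]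
  · refine Finset.sum_congr rfl fun c _ => ?_
    rw [h, integral_indicator (hP c)]
    simp [mul_comm]
  · intro c _
    rw [h]
    exact (integrable_const _).indicator (hP c)

lemma unif_le {t : ℝ} (ht : 0 ≤ t) : unifM.real {u | u ≤ t} ≤ t := by
  unfold unifM
  rw [measureReal_restrict_apply (measurableSet_le (by fun_prop) (by fun_prop))]
  calc _ ≤ volume.real (Set.Icc 0 t) := by
        apply measureReal_mono
        · rintro u ⟨a, b⟩; exact ⟨b.1, a⟩
        · simp
    _ = t := by simp [ht]

lemma unif_ge {t : ℝ} (ht : 0 ≤ t) : 1 - t ≤ unifM.real {u | t ≤ u} := by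
  unfold unifM
  rw [measureReal_restrict_apply (measurableSet_le (by fun_prop) (by fun_prop))]
  calc 1 - t ≤ volume.real (Set.Icc t 1) := by simp [Measure.real, ENNReal.toReal_ofReal']
    _ ≤ _ := by
        apply measureReal_mono
        · rintro u ⟨a, b⟩; exact ⟨a, ht.trans a, b⟩
        · exact ((measure_mono Set.inter_subset_right).trans_lt (by simp)).ne

lemma aux_upper {C : ℕ} {v : Fin C → ℝ} (hpos : ∀ c, 0 < v c) (hsum : ∑ c, v c = 1)
    {p M B : ℝ} (h0 : 0 ≤ p) (h1 : p ≤ 1) (hM : 0 < M) (hB : 0 ≤ B)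
    {F : Measure (Fin C → ℝ)} (hF : F ∈ Strat C B) :
    payoff C v F (eqS v p M) ≤ 1 - p + p * (B / M) := by
  obtain ⟨hae, hi, hle⟩ := strat_mean hB hF
  have := hF.1
  have key : ∀ᵐ x ∂F, ∫ y, (∑ c, if y c ≤ x c then v c else 0) ∂(eqS v p M) ≤
      (1 - p) + p / M * ∑ c, x c := by
    filter_upwards [hae] with x hx
    rw [eqS_integral v h0 h1 (fun y => ∑ c, if y c ≤ x c then v c else 0)
      ((aux_f_meas v).comp (measurable_const.prodMk measurable_id))
      (fun y => by rw [abs_of_nonneg (aux_f_nonneg hpos x y)]; exact aux_f_le hpos hsum x y)]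
    have e : ∀ c u, M * u * v c ≤ x c ↔ u ≤ x c / (M * v c) := fun c u => by
      rw [le_div_iff₀ (mul_pos hM (hpos c))]; ring_nf
    rw [unif_sum v (fun c u => M * u * v c ≤ x c)
      (fun c => measurableSet_le (by fun_prop) (by fun_prop))]
    have a1 := aux_f_le hpos hsum x 0
    have a2 : ∑ c, v c * unifM.real {u | M * u * v c ≤ x c} ≤ ∑ c, x c / M := by
      refine Finset.sum_le_sum fun c _ => ?_
      simp only [e]
      have hv := hpos c
      calc _ ≤ v c * (x c / (M * v c)) := by
            gcongr
            exact unif_le (div_nonneg (hx c) (by positivity))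
        _ = x c / M := by field_simp
    rw [← Finset.sum_div] at a2
    calc _ ≤ (1 - p) * 1 + p * ((∑ c, x c) / M) := by
          gcongr
      _ = _ := by ring
  have hi' : Integrable (fun x : Fin C → ℝ => (1 - p) + p / M * ∑ c, x c) F :=
    (integrable_const _).add (hi.const_mul _)
  calc payoff C v F (eqS v p M) ≤ ∫ x, ((1 - p) + p / M * ∑ c, x c) ∂F :=
        integral_mono_of_nonneg (Filter.Eventually.of_forall fun x =>
          integral_nonneg fun y => aux_f_nonneg hpos x y) hi' key
    _ = (1 - p) + p / M * ∫ x, ∑ c, x c ∂F := by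
        rw [integral_add (integrable_const _) (hi.const_mul _), integral_const_mul]
        simp
    _ ≤ (1 - p) + p / M * B := by gcongr
    _ = _ := by ring

lemma aux_lower {C : ℕ} {v : Fin C → ℝ} (hpos : ∀ c, 0 < v c) (hsum : ∑ c, v c = 1)
    {p M B : ℝ} (h0 : 0 ≤ p) (h1 : p ≤ 1) (hM : 0 < M) (hB : 0 ≤ B)
    {G : Measure (Fin C → ℝ)} (hG : G ∈ Strat C B) :
    p - p * (B / M) ≤ payoff C v (eqS v p M) G := by
  obtain ⟨hae, hi, hle⟩ := strat_mean hB hG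
  have := hG.1
  have hP := eqS_prob v (M := M) h0 h1
  have key : ∀ᵐ y ∂G, p - p / M * ∑ c, y c ≤
      ∫ x, (∑ c, if y c ≤ x c then v c else 0) ∂(eqS v p M) := by
    filter_upwards [hae] with y hy
    rw [eqS_integral v h0 h1 (fun x => ∑ c, if y c ≤ x c then v c else 0)
      ((aux_f_meas v).comp (measurable_id.prodMk measurable_const))
      (fun x => by rw [abs_of_nonneg (aux_f_nonneg hpos x y)]; exact aux_f_le hpos hsum x y)]
    have e : ∀ c u, y c ≤ M * u * v c ↔ y c / (M * v c) ≤ u := fun c u => by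
      rw [div_le_iff₀ (mul_pos hM (hpos c))]; ring_nf
    rw [unif_sum v (fun c u => y c ≤ M * u * v c)
      (fun c => measurableSet_le (by fun_prop) (by fun_prop))]
    have a1 := aux_f_nonneg hpos 0 y
    have a2 : ∑ c, (v c - y c / M) ≤ ∑ c, v c * unifM.real {u | y c ≤ M * u * v c} := by
      refine Finset.sum_le_sum fun c _ => ?_
      simp only [e]
      have hv := hpos c
      calc v c - y c / M = v c * (1 - y c / (M * v c)) := by field_simp
        _ ≤ _ := by
            gcongr
            exact unif_ge (div_nonneg (hy c) (by positivity))
    rw [Finset.sum_sub_distrib, hsum, ← Finset.sum_div] at a2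
    calc _ = (1 - p) * 0 + p * (1 - (∑ c, y c) / M) := by ring
      _ ≤ _ := by
          gcongr
  have hI : Integrable (fun q : (Fin C → ℝ) × (Fin C → ℝ) =>
      ∑ c, (if q.2 c ≤ q.1 c then v c else 0)) ((eqS v p M).prod G) :=
    Integrable.of_bound (aux_f_meas v).aestronglyMeasurable 1
      (Filter.Eventually.of_forall fun q => by
        rw [Real.norm_eq_abs, abs_of_nonneg (aux_f_nonneg hpos q.1 q.2)]
        exact aux_f_le hpos hsum q.1 q.2)
  have hi' : Integrable (fun x : Fin C → ℝ => p - p / M * ∑ c, x c) G :=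
    (integrable_const _).sub (hi.const_mul _)
  have hsw : payoff C v (eqS v p M) G =
      ∫ y, ∫ x, (∑ c, if y c ≤ x c then v c else 0) ∂(eqS v p M) ∂G :=
    integral_integral_swap hI
  rw [hsw]
  calc _ = p - p / M * B := by ring
    _ ≤ p - p / M * ∫ x, ∑ c, x c ∂G := by gcongr
    _ = ∫ y, (p - p / M * ∑ c, y c) ∂G := by
        rw [integral_sub (integrable_const _) (hi.const_mul _), integral_const_mul]
        simp
    _ ≤ _ := integral_mono_ae hi' hI.integral_prod_right key

lemma aux_minimax {C : ℕ} {v : Fin C → ℝ} (hpos : ∀ c, 0 < v c) (hsum : ∑ c, v c = 1)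
    {X Y V : ℝ} (F₀ : Strat C X) (G₀ : Strat C Y)
    (hl : ∀ G : Strat C Y, V ≤ payoff C v F₀.1 G.1)
    (hu : ∀ F : Strat C X, payoff C v F.1 G₀.1 ≤ V) :
    (⨆ F : Strat C X, ⨅ G : Strat C Y, payoff C v F.1 G.1) = V ∧
    (⨅ G : Strat C Y, ⨆ F : Strat C X, payoff C v F.1 G.1) = V := by
  have : Nonempty (Strat C X) := ⟨F₀⟩
  have : Nonempty (Strat C Y) := ⟨G₀⟩
  have bb : ∀ F : Strat C X, BddBelow (Set.range fun G : Strat C Y => payoff C v F.1 G.1) :=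
    fun F => ⟨0, by rintro _ ⟨G, rfl⟩; exact aux_payoff_nonneg hpos _ _⟩
  have ba : ∀ G : Strat C Y, BddAbove (Set.range fun F : Strat C X => payoff C v F.1 G.1) :=
    fun G => ⟨1, by
      rintro _ ⟨F, rfl⟩
      have := F.2.1
      have := G.2.1
      exact aux_payoff_le hpos hsum _ _⟩
  have h1 : ∀ F : Strat C X, (⨅ G : Strat C Y, payoff C v F.1 G.1) ≤ V :=
    fun F => (ciInf_le (bb F) G₀).trans (hu F)
  have h2 : ∀ G : Strat C Y, V ≤ (⨆ F : Strat C X, payoff C v F.1 G.1) :=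
    fun G => (hl G).trans (le_ciSup (ba G) F₀)
  refine ⟨le_antisymm (ciSup_le h1) ?_, le_antisymm ?_ (le_ciInf h2)⟩
  · exact (le_ciInf hl).trans (le_ciSup (f := fun F : Strat C X =>
      ⨅ G : Strat C Y, payoff C v F.1 G.1) ⟨V, by rintro _ ⟨F, rfl⟩; exact h1 F⟩ F₀)
  · exact (ciInf_le (f := fun G : Strat C Y => ⨆ F : Strat C X, payoff C v F.1 G.1)
      ⟨V, by rintro _ ⟨G, rfl⟩; exact h2 G⟩ G₀).trans (ciSup_le hu)

/-- Theorem 1, classic General Lotto: the max-min and min-max values of the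
game `GL(X,Y;v)` coincide and equal `π_GL(X,Y) = X/(2Y)` if `X ≤ Y`, `1 - Y/(2X)` if `X > Y`. -/
theorem GL_equilibrium_value (C : ℕ) (hC : 0 < C) (v : Fin C → ℝ)
    (hpos : ∀ c, 0 < v c) (hsum : ∑ c, v c = 1)
    (X Y : ℝ) (hX : 0 < X) (hY : 0 < Y) :
    (⨆ F : Strat C X, ⨅ G : Strat C Y, payoff C v F.1 G.1) =
        (if X ≤ Y then X / (2 * Y) else 1 - Y / (2 * X)) ∧
    (⨅ G : Strat C Y, ⨆ F : Strat C X, payoff C v F.1 G.1) =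
        (if X ≤ Y then X / (2 * Y) else 1 - Y / (2 * X)) := by
  split_ifs with h
  · have hp1 : X / Y ≤ 1 := (div_le_one hY).2 h
    have hp0 : 0 ≤ X / Y := by positivity
    refine aux_minimax hpos hsum
      ⟨eqS v (X / Y) (2 * Y), eqS_strat hpos hsum hp0 hp1 (by positivity)
        (by apply le_of_eq; field_simp)⟩
      ⟨eqS v 1 (2 * Y), eqS_strat hpos hsum zero_le_one le_rfl (by positivity)
        (by apply le_of_eq; field_simp)⟩ (fun G => ?_) (fun F => ?_)
    · refine le_trans (le_of_eq ?_)
        (aux_lower hpos hsum hp0 hp1 (M := 2 * Y) (by positivity) hY.le G.2)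
      field_simp
      ring
    · refine (aux_upper hpos hsum zero_le_one le_rfl (M := 2 * Y) (by positivity) hX.le F.2).trans
        (le_of_eq ?_)
      ring
  · have hp1 : Y / X ≤ 1 := (div_le_one hX).2 (not_le.1 h).le
    have hp0 : 0 ≤ Y / X := by positivity
    refine aux_minimax hpos hsum
      ⟨eqS v 1 (2 * X), eqS_strat hpos hsum zero_le_one le_rfl (by positivity)
        (by apply le_of_eq; field_simp)⟩
      ⟨eqS v (Y / X) (2 * X), eqS_strat hpos hsum hp0 hp1 (by positivity)
        (by apply le_of_eq; field_simp)⟩ (fun G => ?_) (fun F => ?_)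
    · refine le_trans (le_of_eq ?_)
        (aux_lower hpos hsum zero_le_one le_rfl (M := 2 * X) (by positivity) hY.le G.2)
      ring
    · refine (aux_upper hpos hsum hp0 hp1 (M := 2 * X) (by positivity) hX.le F.2).trans
        (le_of_eq ?_)
      field_simp
      ring
end
end

section
/- In the restricted game RL^1(X,Y;v) with distinct decreasing contest values, the min-max value of player X is bounded above by the minimum of UB over the equalizing points of the top-k contest sets: inf_{F_Y ∈ 𝔽^1(Y)} sup_{F_X ∈ 𝔽(X)} π_X(F_X,F_Y) ≤ min_{k ∈ {1,…,C}} UB(q([k])). -/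
open MeasureTheory Finset

noncomputable section

/-- Allocations `t·e_c` with at most one positive coordinate. -/
def R1 (C : ℕ) : Set (Fin C → ℝ) :=
  {y | ∃ c : Fin C, ∃ t : ℝ, 0 ≤ t ∧ y = fun c' => if c' = c then t else 0}

/-- Restricted strategies: admissible strategies concentrated on `R1`. -/
def Strat1 (C : ℕ) (B : ℝ) : Set (Measure (Fin C → ℝ)) :=
  {μ | μ ∈ Strat C B ∧ μ (R1 C) = 1}

/-- The upper-bound objective `UB(p)`. -/
def UB (C : ℕ) (v : Fin C → ℝ) (X Y : ℝ) (p : Fin C → ℝ) : ℝ :=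
  if Y / X * (∑ c, v c * p c) ≤ ⨆ c, v c * p c then
    1 - Y / (2 * X) * (∑ c, v c * p c) ^ 2 / (⨆ c, v c * p c)
  else
    1 - (∑ c, v c * p c) + X / (2 * Y) * (⨆ c, v c * p c)

/-- The equalizing point `q(S)` of a subset `S` of contests. -/
def qvec (C : ℕ) (v : Fin C → ℝ) (S : Finset (Fin C)) : Fin C → ℝ :=
  fun c => if c ∈ S then
    (∏ j ∈ S.erase c, v j) / (∑ l ∈ S, ∏ j ∈ S.erase l, v j)
  else 0

/-- The top `k` contests in value, `[k] = {1,…,k}`. -/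
def topk (C k : ℕ) : Finset (Fin C) := Finset.univ.filter (fun c => (c : ℕ) < k)

def tauM (a b : ℝ) : Measure ℝ :=
  ENNReal.ofReal (1 - a) • Measure.dirac 0 + ENNReal.ofReal (a / b) • volume.restrict (Set.Icc 0 b)

def gM (C : ℕ) (p : Fin C → ℝ) (a b : ℝ) : Measure (Fin C → ℝ) :=
  ∑ c, ENNReal.ofReal (p c) • (tauM a b).map (fun t => (Pi.single c t : Fin C → ℝ))

lemma tauM_Ici (a b : ℝ) (ha : 0 < a) (ha1 : a ≤ 1) (hb : 0 < b) :
    tauM a b (Set.Ici 0) = 1 := by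
  have h : (Set.Ici (0:ℝ)) ∩ Set.Icc 0 b = Set.Icc 0 b := by
    ext t; simp +contextual
  simp only [tauM, Measure.add_apply, Measure.smul_apply, smul_eq_mul]
  rw [Measure.restrict_apply measurableSet_Ici, h, Real.volume_Icc,
    Measure.dirac_apply' _ measurableSet_Ici, ← ENNReal.ofReal_mul (by positivity)]
  simp only [Set.mem_Ici, le_refl, Set.indicator_of_mem, Pi.one_apply, mul_one]
  rw [← ENNReal.ofReal_add (by linarith) (by simp; positivity), ← ENNReal.ofReal_one]
  congr 1
  field_simp
  ring

lemma tauM_univ (a b : ℝ) (ha : 0 < a) (ha1 : a ≤ 1) (hb : 0 < b) :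
    tauM a b Set.univ = 1 := by
  simp only [tauM, Measure.add_apply, Measure.smul_apply, smul_eq_mul]
  rw [Measure.restrict_apply MeasurableSet.univ, Set.univ_inter, Real.volume_Icc,
    Measure.dirac_apply' _ MeasurableSet.univ, ← ENNReal.ofReal_mul (by positivity)]
  simp only [Set.mem_univ, Set.indicator_of_mem, Pi.one_apply, mul_one]
  rw [← ENNReal.ofReal_add (by linarith) (by simp; positivity), ← ENNReal.ofReal_one]
  congr 1
  field_simp
  ring

lemma tauM_Ioi (a b x : ℝ) (ha : 0 < a) (hb : 0 < b) (hx : 0 ≤ x) :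
    ENNReal.ofReal (a / b * (b - x)) ≤ tauM a b (Set.Ioi x) := by
  simp only [tauM, Measure.add_apply, Measure.smul_apply, smul_eq_mul]
  refine le_trans ?_ le_add_self
  rw [ENNReal.ofReal_mul (by positivity)]
  gcongr
  rw [Measure.restrict_apply measurableSet_Ioi, ← Real.volume_Ioc]
  apply measure_mono
  intro t ht
  exact ⟨ht.1, by linarith [ht.1], ht.2⟩

lemma tauM_mean (a b : ℝ) (ha : 0 < a) (hb : 0 < b) :
    ∫⁻ t, ENNReal.ofReal t ∂(tauM a b) = ENNReal.ofReal (a * b / 2) := by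
  have h : ∫⁻ t in Set.Icc 0 b, ENNReal.ofReal t = ENNReal.ofReal (b ^ 2 / 2) := by
    rw [← ofReal_integral_eq_lintegral_ofReal]
    · rw [integral_Icc_eq_integral_Ioc, ← intervalIntegral.integral_of_le hb.le, integral_id]
      simp
    · exact continuous_id.integrableOn_Icc
    · filter_upwards [ae_restrict_mem measurableSet_Icc] with t ht using ht.1
  simp only [tauM, lintegral_add_measure, lintegral_smul_measure, smul_eq_mul]
  rw [h, lintegral_dirac' _ ENNReal.measurable_ofReal]
  simp only [ENNReal.ofReal_zero, mul_zero, zero_add]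
  rw [← ENNReal.ofReal_mul (by positivity)]
  congr 1
  field_simp

lemma meas_single (C : ℕ) (c : Fin C) :
    Measurable (fun t : ℝ => (Pi.single c t : Fin C → ℝ)) := by
  exact (continuous_single (A := fun _ : Fin C => ℝ) c).measurable

lemma gM_univ (C : ℕ) (p : Fin C → ℝ) (hp : ∀ c, 0 ≤ p c) (hp1 : ∑ c, p c = 1)
    (a b : ℝ) (ha : 0 < a) (ha1 : a ≤ 1) (hb : 0 < b) : gM C p a b Set.univ = 1 := by
  simp only [gM, Measure.finset_sum_apply, Measure.smul_apply, smul_eq_mul]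
  rw [← ENNReal.ofReal_one, ← hp1, ENNReal.ofReal_sum_of_nonneg (fun c _ => hp c)]
  refine Finset.sum_congr rfl fun c _ => ?_
  rw [Measure.map_apply (meas_single C c) MeasurableSet.univ, Set.preimage_univ,
    tauM_univ a b ha ha1 hb, mul_one]

lemma gM_one (C : ℕ) (p : Fin C → ℝ) (hp : ∀ c, 0 ≤ p c) (hp1 : ∑ c, p c = 1)
    (a b : ℝ) (ha : 0 < a) (ha1 : a ≤ 1) (hb : 0 < b) (s : Set (Fin C → ℝ))
    (hs : ∀ c t, 0 ≤ t → Pi.single c t ∈ s) : gM C p a b s = 1 := by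
  refine le_antisymm ((measure_mono (Set.subset_univ s)).trans
    (gM_univ C p hp hp1 a b ha ha1 hb).le) ?_
  simp only [gM, Measure.finset_sum_apply, Measure.smul_apply, smul_eq_mul]
  rw [← ENNReal.ofReal_one, ← hp1, ENNReal.ofReal_sum_of_nonneg (fun c _ => hp c)]
  refine Finset.sum_le_sum fun c _ => ?_
  conv_lhs => rw [← mul_one (ENNReal.ofReal (p c)), ← tauM_Ici a b ha ha1 hb]
  gcongr
  exact (measure_mono (fun t ht => hs c t ht)).trans
    (Measure.le_map_apply (meas_single C c).aemeasurable s)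

lemma gM_mem (C : ℕ) (p : Fin C → ℝ) (hp : ∀ c, 0 ≤ p c) (hp1 : ∑ c, p c = 1)
    (a b Y : ℝ) (ha : 0 < a) (ha1 : a ≤ 1) (hb : 0 < b) (hab : a * b / 2 = Y) :
    gM C p a b ∈ Strat1 C Y := by
  refine ⟨⟨⟨gM_univ C p hp hp1 a b ha ha1 hb⟩, ?_, ?_⟩, ?_⟩
  · refine gM_one C p hp hp1 a b ha ha1 hb _ fun c t ht c' => ?_
    rw [Pi.single_apply]; split_ifs <;> simp [ht]
  · simp only [gM, lintegral_finset_sum_measure, lintegral_smul_measure, smul_eq_mul]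
    have : ∀ c : Fin C, ∫⁻ x, ENNReal.ofReal (∑ c, x c)
        ∂((tauM a b).map (fun t => (Pi.single c t : Fin C → ℝ))) = ENNReal.ofReal Y := by
      intro c
      rw [lintegral_map (by fun_prop) (meas_single C c), ← hab, ← tauM_mean a b ha hb]
      simp
    simp only [this]
    rw [← Finset.sum_mul, ← ENNReal.ofReal_sum_of_nonneg (fun c _ => hp c), hp1]
    simp
  · refine gM_one C p hp hp1 a b ha ha1 hb _ fun c t ht => ⟨c, t, ht, ?_⟩
    ext c'
    rw [Pi.single_apply]

lemma gM_tail (C : ℕ) (p : Fin C → ℝ) (hp : ∀ c, 0 ≤ p c)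
    (a b x : ℝ) (ha : 0 < a) (hb : 0 < b) (hx : 0 ≤ x) (c : Fin C) :
    ENNReal.ofReal (p c * (a / b * (b - x))) ≤ gM C p a b {y | x < y c} := by
  simp only [gM, Measure.finset_sum_apply, Measure.smul_apply, smul_eq_mul]
  refine le_trans ?_ (Finset.single_le_sum (fun i _ => zero_le) (Finset.mem_univ c))
  rw [ENNReal.ofReal_mul (hp c)]
  gcongr
  refine (tauM_Ioi a b x ha hb hx).trans ?_
  refine le_trans (measure_mono ?_) (Measure.le_map_apply (meas_single C c).aemeasurable _)
  intro t ht
  simpa using ht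

lemma inner_le (C : ℕ) (v : Fin C → ℝ) (hpos : ∀ c, 0 < v c) (hsum : ∑ c, v c = 1)
    (p : Fin C → ℝ) (hp : ∀ c, 0 ≤ p c) (hp1 : ∑ c, p c = 1)
    (a b : ℝ) (ha : 0 < a) (ha1 : a ≤ 1) (hb : 0 < b) (M : ℝ) (hM : ∀ c, v c * p c ≤ M)
    (x : Fin C → ℝ) (hx : ∀ c, 0 ≤ x c) :
    ∫ y, (∑ c, if y c ≤ x c then v c else 0) ∂(gM C p a b) ≤
      1 - a * (∑ c, v c * p c) + a / b * M * ∑ c, x c := by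
  haveI : IsProbabilityMeasure (gM C p a b) := ⟨gM_univ C p hp hp1 a b ha ha1 hb⟩
  have hms : ∀ c, MeasurableSet {y : Fin C → ℝ | y c ≤ x c} := fun c =>
    measurableSet_le (measurable_pi_apply c) measurable_const
  have hfun : ∀ c, (fun y : Fin C → ℝ => if y c ≤ x c then v c else 0) =
      Set.indicator {y : Fin C → ℝ | y c ≤ x c} (fun _ => v c) := by
    intro c; ext y; simp [Set.indicator_apply]
  rw [integral_finset_sum]
  swap
  · intro c _
    rw [hfun c]
    exact (integrable_const _).indicator (hms c)
  have hc : ∀ c, ∫ y, (if y c ≤ x c then v c else 0) ∂(gM C p a b) ≤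
      v c - a * (v c * p c) + a / b * M * x c := by
    intro c
    rw [hfun c, integral_indicator_const _ (hms c)]
    have h1 : (gM C p a b).real {y | y c ≤ x c} = 1 - (gM C p a b).real {y | x c < y c} := by
      rw [← probReal_compl_eq_one_sub]
      · congr 1; ext y; simp
      · exact measurableSet_lt measurable_const (measurable_pi_apply c)
    have h2 : p c * (a / b * (b - x c)) ≤ (gM C p a b).real {y | x c < y c} :=
      (ENNReal.ofReal_le_iff_le_toReal (measure_ne_top _ _)).1
        (gM_tail C p hp a b (x c) ha hb (hx c) c)
    rw [h1, smul_eq_mul]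
    have h3 : p c * (a / b * (b - x c)) = a * p c - a / b * p c * x c := by
      field_simp
    have h4 : a / b * x c * (v c * p c) ≤ a / b * x c * M :=
      mul_le_mul_of_nonneg_left (hM c) (mul_nonneg (by positivity) (hx c))
    have h5 := mul_le_mul_of_nonneg_left h2 (hpos c).le
    rw [h3] at h5
    nlinarith
  refine (Finset.sum_le_sum fun c _ => hc c).trans (le_of_eq ?_)
  rw [Finset.sum_add_distrib, Finset.sum_sub_distrib, hsum, Finset.mul_sum, Finset.mul_sum]

lemma payoff_nonneg (C : ℕ) (v : Fin C → ℝ) (hpos : ∀ c, 0 < v c)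
    (F G : Measure (Fin C → ℝ)) : 0 ≤ payoff C v F G := by
  refine integral_nonneg fun x => integral_nonneg fun y => Finset.sum_nonneg fun c _ => ?_
  split_ifs
  · exact (hpos c).le
  · exact le_rfl

lemma payoff_le (C : ℕ) (v : Fin C → ℝ) (hpos : ∀ c, 0 < v c) (hsum : ∑ c, v c = 1)
    (p : Fin C → ℝ) (hp : ∀ c, 0 ≤ p c) (hp1 : ∑ c, p c = 1)
    (a b : ℝ) (ha : 0 < a) (ha1 : a ≤ 1) (hb : 0 < b) (M : ℝ) (hM0 : 0 ≤ M)
    (hM : ∀ c, v c * p c ≤ M) (X : ℝ) (hX : 0 < X) (F : Measure (Fin C → ℝ)) (hF : F ∈ Strat C X) :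
    payoff C v F (gM C p a b) ≤ 1 - a * (∑ c, v c * p c) + a / b * M * X := by
  obtain ⟨hprob, horth, hbud⟩ := hF
  have hae : ∀ᵐ x ∂F, ∀ c, 0 ≤ x c := by
    have hm : MeasurableSet {x : Fin C → ℝ | ∀ c, 0 ≤ x c} := by
      rw [Set.setOf_forall]
      exact MeasurableSet.iInter fun c => measurableSet_le measurable_const (measurable_pi_apply c)
    exact (prob_compl_eq_zero_iff hm).2 horth
  have hS0 : 0 ≤ᵐ[F] fun x => ∑ c, x c := by
    filter_upwards [hae] with x hx using Finset.sum_nonneg fun c _ => hx c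
  have hSm : AEStronglyMeasurable (fun x : Fin C → ℝ => ∑ c, x c) F :=
    (by fun_prop : Measurable (fun x : Fin C → ℝ => ∑ c, x c)).aestronglyMeasurable
  have hSi : Integrable (fun x : Fin C → ℝ => ∑ c, x c) F := by
    refine ⟨hSm, ?_⟩
    rw [hasFiniteIntegral_iff_ofReal hS0]
    exact hbud.trans_lt ENNReal.ofReal_lt_top
  have hSX : ∫ x, (∑ c, x c) ∂F ≤ X := by
    rw [integral_eq_lintegral_of_nonneg_ae hS0 hSm]
    exact ENNReal.toReal_le_of_le_ofReal hX.le hbud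
  calc payoff C v F (gM C p a b)
      ≤ ∫ x, (1 - a * (∑ c, v c * p c) + a / b * M * ∑ c, x c) ∂F := by
        refine integral_mono_of_nonneg (Filter.Eventually.of_forall fun x =>
          integral_nonneg fun y => Finset.sum_nonneg fun c _ => ?_) ?_ ?_
        · split_ifs
          · exact (hpos c).le
          · exact le_rfl
        · exact (integrable_const _).add (hSi.const_mul _)
        · filter_upwards [hae] with x hx
          exact inner_le C v hpos hsum p hp hp1 a b ha ha1 hb M hM x hx
    _ = 1 - a * (∑ c, v c * p c) + a / b * M * ∫ x, (∑ c, x c) ∂F := by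
        rw [integral_add (integrable_const _) (hSi.const_mul _), integral_const_mul]
        simp
    _ ≤ _ := by gcongr

lemma minmax_le_UB (C : ℕ) (v : Fin C → ℝ)
    (hpos : ∀ c, 0 < v c) (hsum : ∑ c, v c = 1)
    (X Y : ℝ) (hX : 0 < X) (hY : 0 < Y)
    (p : Fin C → ℝ) (hp : ∀ c, 0 ≤ p c) (hp1 : ∑ c, p c = 1) :
    (⨅ G : Strat1 C Y, ⨆ F : Strat C X, payoff C v F.1 G.1) ≤ UB C v X Y p := by
  set M := ⨆ c, v c * p c with hMdef
  set V := ∑ c, v c * p c with hVdef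
  have hM : ∀ c, v c * p c ≤ M := fun c => le_ciSup (f := fun c => v c * p c)
    (Set.finite_range _).bddAbove c
  obtain ⟨c0, -, hc0⟩ : ∃ c ∈ Finset.univ, 0 < p c :=
    Finset.exists_lt_of_sum_lt (f := fun _ => (0:ℝ)) (by simp [hp1])
  have hM0 : 0 < M := (mul_pos (hpos c0) hc0).trans_le (hM c0)
  have hV0 : 0 < V := Finset.sum_pos' (fun c _ => mul_nonneg (hpos c).le (hp c))
    ⟨c0, Finset.mem_univ _, mul_pos (hpos c0) hc0⟩
  have hne : Nonempty (Strat C X) := by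
    refine ⟨⟨Measure.dirac 0, inferInstance, ?_, ?_⟩⟩
    · apply Measure.dirac_apply_of_mem; simp
    · rw [lintegral_dirac]; simp
  have key : ∀ a : ℝ, 0 < a → a ≤ 1 →
      (⨅ G : Strat1 C Y, ⨆ F : Strat C X, payoff C v F.1 G.1) ≤
        1 - a * V + a ^ 2 * M * X / (2 * Y) := by
    intro a ha ha1
    have hb : 0 < 2 * Y / a := by positivity
    have hG := gM_mem C p hp hp1 a (2 * Y / a) Y ha ha1 hb (by field_simp)
    refine (ciInf_le ⟨0, ?_⟩ (⟨_, hG⟩ : Strat1 C Y)).trans (ciSup_le fun F => ?_)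
    · rintro _ ⟨G, rfl⟩
      exact Real.iSup_nonneg fun F => payoff_nonneg C v hpos _ _
    · refine (payoff_le C v hpos hsum p hp hp1 a (2 * Y / a) ha ha1 hb M hM0.le hM X hX
        F.1 F.2).trans (le_of_eq ?_)
      rw [← hVdef]
      field_simp
  unfold UB
  rw [← hMdef, ← hVdef]
  split_ifs with h
  · refine (key (Y / X * V / M) (by positivity) ((div_le_one hM0).2 h)).trans (le_of_eq ?_)
    field_simp
    ring
  · refine (key 1 one_pos le_rfl).trans (le_of_eq ?_)
    field_simp

/-- Theorem 2, part 2: in the restricted game `RL^1(X,Y;v)` with distinct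
decreasing contest values, the min-max value of player X is at most
`min_{k ∈ {1,…,C}} UB(q([k]))`. -/
theorem RL1_minmax_upper_bound_topk (C : ℕ) (hC : 0 < C) (v : Fin C → ℝ)
    (hpos : ∀ c, 0 < v c) (hdec : StrictAnti v) (hsum : ∑ c, v c = 1)
    (X Y : ℝ) (hX : 0 < X) (hY : 0 < Y) :
    (⨅ G : Strat1 C Y, ⨆ F : Strat C X, payoff C v F.1 G.1) ≤
      ⨅ i : Fin C, UB C v X Y (qvec C v (topk C ((i : ℕ) + 1))) := by
  haveI : Nonempty (Fin C) := ⟨⟨0, hC⟩⟩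
  refine le_ciInf fun i => ?_
  have hden : 0 < ∑ l ∈ topk C ((i : ℕ) + 1), ∏ j ∈ (topk C ((i : ℕ) + 1)).erase l, v j :=
    Finset.sum_pos (fun l _ => Finset.prod_pos fun j _ => hpos j) ⟨i, by simp [topk]⟩
  refine minmax_le_UB C v hpos hsum X Y hX hY _ (fun c => ?_) ?_
  · unfold qvec
    split_ifs
    · exact div_nonneg (Finset.prod_nonneg fun j _ => (hpos j).le) hden.le
    · exact le_rfl
  · unfold qvec
    rw [Finset.sum_ite_mem, Finset.univ_inter, ← Finset.sum_div, div_self hden.ne']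
end
end

section
/- The minimum of UB over the probability simplex is attained among the equalizing points of the top-k contest sets: min_{p ∈ Δ} UB(p) = min_{k ∈ {1,…,C}} UB(q([k])). -/
open Finset

noncomputable section

lemma UB_le_aux (C : ℕ) (v : Fin C → ℝ) (X Y : ℝ) (hX : 0 < X) (hY : 0 < Y) (p : Fin C → ℝ)
    (s m : ℝ) (hs : ∑ c, v c * p c = s) (hm : ⨆ c, v c * p c = m) (hm0 : 0 < m)
    (t : ℝ) (_ht0 : 0 ≤ t) (ht1 : t ≤ 1) :
    UB C v X Y p ≤ 1 - t * s + t ^ 2 * (X / (2 * Y)) * m := by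
  unfold UB
  rw [hs, hm]
  split_ifs with h
  · have e : 1 - t * s + t ^ 2 * (X / (2 * Y)) * m - (1 - Y / (2 * X) * s ^ 2 / m)
        = (t * X * m - Y * s) ^ 2 / (2 * X * Y * m) := by
      field_simp
      ring
    have : 0 ≤ (t * X * m - Y * s) ^ 2 / (2 * X * Y * m) := by positivity
    linarith
  · push Not at h
    have h' : X * m < Y * s := by
      have := mul_lt_mul_of_pos_left h hX
      field_simp at this
      linarith
    have e : 1 - t * s + t ^ 2 * (X / (2 * Y)) * m - (1 - s + X / (2 * Y) * m)
        = (1 - t) * (2 * (Y * s) - (1 + t) * (X * m)) / (2 * Y) := by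
      field_simp
      ring
    have h2 : 0 ≤ 2 * (Y * s) - (1 + t) * (X * m) := by
      have : 0 < X * m := by positivity
      nlinarith
    have : 0 ≤ (1 - t) * (2 * (Y * s) - (1 + t) * (X * m)) / (2 * Y) := by
      have : 0 ≤ 1 - t := by linarith
      positivity
    linarith

lemma UB_eq_aux (C : ℕ) (v : Fin C → ℝ) (X Y : ℝ) (hX : 0 < X) (hY : 0 < Y) (p : Fin C → ℝ)
    (s m : ℝ) (hs : ∑ c, v c * p c = s) (hm : ⨆ c, v c * p c = m) (hm0 : 0 < m) (hs0 : 0 ≤ s) :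
    ∃ t : ℝ, 0 ≤ t ∧ t ≤ 1 ∧
      UB C v X Y p = 1 - t * s + t ^ 2 * (X / (2 * Y)) * m := by
  unfold UB
  rw [hs, hm]
  split_ifs with h
  · refine ⟨Y / X * s / m, by positivity, ?_, ?_⟩
    · rw [div_le_one hm0]; exact h
    · field_simp
      ring
  · exact ⟨1, by norm_num, le_refl _, by ring⟩

lemma qvec_eq_aux (C : ℕ) (v : Fin C → ℝ) (hpos : ∀ c, 0 < v c) (S : Finset (Fin C)) (c : Fin C) :
    qvec C v S c = if c ∈ S then (v c)⁻¹ / ∑ l ∈ S, (v l)⁻¹ else 0 := by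
  unfold qvec
  split_ifs with h
  · have e : ∀ l ∈ S, ∏ j ∈ S.erase l, v j = (∏ j ∈ S, v j) * (v l)⁻¹ := by
      intro l hl
      rw [← Finset.mul_prod_erase S v hl]
      have := (hpos l).ne'
      field_simp
    rw [Finset.sum_congr rfl e, ← Finset.mul_sum, e c h]
    exact mul_div_mul_left _ _ (Finset.prod_pos fun j _ => hpos j).ne'
  · rfl

lemma vq_aux (C : ℕ) (v : Fin C → ℝ) (hpos : ∀ c, 0 < v c) (S : Finset (Fin C)) (c : Fin C) :
    v c * qvec C v S c = if c ∈ S then (∑ l ∈ S, (v l)⁻¹)⁻¹ else 0 := by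
  rw [qvec_eq_aux C v hpos]
  have := (hpos c).ne'
  split_ifs
  · rw [div_eq_mul_inv, ← mul_assoc, mul_inv_cancel₀ this, one_mul]
  · simp

lemma qsum_aux (C : ℕ) (v : Fin C → ℝ) (hpos : ∀ c, 0 < v c) (S : Finset (Fin C)) :
    ∑ c, v c * qvec C v S c = (S.card : ℝ) * (∑ l ∈ S, (v l)⁻¹)⁻¹ := by
  simp only [vq_aux C v hpos]
  simp [Finset.sum_ite_mem]

lemma qsup_aux (C : ℕ) (v : Fin C → ℝ) (hpos : ∀ c, 0 < v c) (S : Finset (Fin C))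
    (hS : S.Nonempty) :
    ⨆ c, v c * qvec C v S c = (∑ l ∈ S, (v l)⁻¹)⁻¹ := by
  simp only [vq_aux C v hpos]
  obtain ⟨i, hi⟩ := hS
  have : Nonempty (Fin C) := ⟨i⟩
  have h0 : 0 ≤ (∑ l ∈ S, (v l)⁻¹)⁻¹ :=
    inv_nonneg.2 (Finset.sum_nonneg fun l _ => (inv_pos.2 (hpos l)).le)
  apply le_antisymm
  · apply ciSup_le
    intro c
    split_ifs
    · exact le_refl _
    · exact h0
  · have := le_ciSup (f := fun c => if c ∈ S then (∑ l ∈ S, (v l)⁻¹)⁻¹ else 0)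
      (Set.finite_range _).bddAbove i
    simpa [hi] using this

lemma main_aux (C : ℕ) (v : Fin C → ℝ)
    (hpos : ∀ c, 0 < v c) (hdec : StrictAnti v)
    (X Y : ℝ) (hX : 0 < X) (hY : 0 < Y) (I : ℝ)
    (hI : ∀ i : Fin C, I ≤ UB C v X Y (qvec C v (topk C ((i : ℕ) + 1))))
    (p : Fin C → ℝ) (hp : p ∈ stdSimplex ℝ (Fin C)) : I ≤ UB C v X Y p := by
  obtain ⟨hp0, hp1⟩ := hp
  obtain ⟨m, hm⟩ : ∃ m, ⨆ c, v c * p c = m := ⟨_, rfl⟩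
  have hle : ∀ c, v c * p c ≤ m := fun c => by
    rw [← hm]
    exact le_ciSup (f := fun c => v c * p c) (Set.finite_range _).bddAbove c
  have hm0 : 0 < m := by
    obtain ⟨c, hc⟩ : ∃ c, 0 < p c := by
      by_contra! h
      have := Finset.sum_nonpos (s := Finset.univ) (f := p) fun c _ => h c
      linarith
    exact lt_of_lt_of_le (mul_pos (hpos c) hc) (hle c)
  have hw0 : ∀ c, 0 ≤ v c * p c := fun c => mul_nonneg (hpos c).le (hp0 c)
  obtain ⟨t, ht0, ht1, ht⟩ := UB_eq_aux C v X Y hX hY p _ m rfl hm hm0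
    (Finset.sum_nonneg fun c _ => hw0 c)
  rw [ht]
  set K := X / (2 * Y) with hK
  have hK0 : 0 < K := by positivity
  -- bound for every top set
  have hk : ∀ i : Fin C, (((topk C (i + 1)).card : ℝ)) * t - t ^ 2 * K
      ≤ (1 - I) * ∑ l ∈ topk C (i + 1), (v l)⁻¹ := by
    intro i
    have hne : (topk C (i + 1)).Nonempty := ⟨i, by simp [topk]⟩
    have hA : 0 < ∑ l ∈ topk C (i + 1), (v l)⁻¹ :=
      Finset.sum_pos (fun l _ => inv_pos.2 (hpos l)) hne
    have h1 := (hI i).trans (UB_le_aux C v X Y hX hY _ _ _ (qsum_aux C v hpos _)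
      (qsup_aux C v hpos _ hne) (inv_pos.2 hA) t ht0 ht1)
    rw [← hK] at h1
    set A := ∑ l ∈ topk C (i + 1), (v l)⁻¹
    have h2 := mul_le_mul_of_nonneg_right h1 hA.le
    have e : (1 - t * (((topk C (i + 1)).card : ℝ) * A⁻¹) + t ^ 2 * K * A⁻¹) * A
        = A - t * ((topk C (i + 1)).card : ℝ) + t ^ 2 * K := by
      field_simp
    rw [e] at h2
    linarith
  have key : ∑ c, (v c * p c) * (t - (1 - I) * (v c)⁻¹) ≤ m * (t ^ 2 * K) := by
    set P := Finset.univ.filter (fun c => 0 < t - (1 - I) * (v c)⁻¹) with hP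
    have h1 : ∑ c, (v c * p c) * (t - (1 - I) * (v c)⁻¹)
        ≤ m * ∑ c ∈ P, (t - (1 - I) * (v c)⁻¹) := by
      rw [hP, Finset.sum_filter, Finset.mul_sum]
      apply Finset.sum_le_sum
      intro c _
      split_ifs with h
      · exact mul_le_mul_of_nonneg_right (hle c) h.le
      · rw [mul_zero]
        exact mul_nonpos_of_nonneg_of_nonpos (hw0 c) (not_lt.1 h)
    refine h1.trans (mul_le_mul_of_nonneg_left ?_ hm0.le)
    rcases P.eq_empty_or_nonempty with h0 | hne
    · rw [h0]
      simp only [Finset.sum_empty]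
      positivity
    · have hmax := P.max'_mem hne
      set i := P.max' hne with hi
      have hPe : P = topk C (i + 1) := by
        ext d
        constructor
        · intro hd
          have : d ≤ i := P.le_max' d hd
          simp only [topk, Finset.mem_filter, Finset.mem_univ, true_and]
          have : (d : ℕ) ≤ i := this
          omega
        · intro hd
          simp only [topk, Finset.mem_filter, Finset.mem_univ, true_and] at hd
          have hdi : d ≤ i := by
            show (d : ℕ) ≤ i
            omega
          have hi2 : 0 < t - (1 - I) * (v i)⁻¹ := (Finset.mem_filter.1 hmax).2
          simp only [hP, Finset.mem_filter, Finset.mem_univ, true_and]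
          have hv : (v d)⁻¹ ≤ (v i)⁻¹ := inv_anti₀ (hpos i) (hdec.antitone hdi)
          have hvd := inv_pos.2 (hpos d)
          rcases le_or_gt 0 (1 - I) with hB | hB
          · have := mul_le_mul_of_nonneg_left hv hB
            linarith
          · have := mul_neg_of_neg_of_pos hB hvd
            linarith
      rw [hPe, Finset.sum_sub_distrib, Finset.sum_const, nsmul_eq_mul, ← Finset.mul_sum]
      have := hk i
      linarith
  have e : ∑ c, (v c * p c) * (t - (1 - I) * (v c)⁻¹)
      = t * ∑ c, v c * p c - (1 - I) := by
    have : ∀ c, (v c * p c) * (t - (1 - I) * (v c)⁻¹) = t * (v c * p c) - (1 - I) * p c := by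
      intro c
      have := (hpos c).ne'
      field_simp
    simp only [this]
    rw [Finset.sum_sub_distrib, ← Finset.mul_sum, ← Finset.mul_sum, hp1, mul_one]
  rw [e] at key
  linarith

/-- Lemma 3: the minimum of `UB` over the probability simplex equals the
minimum of `UB` over the equalizing points of the top-`k` contest sets, `k = 1,…,C`. -/
theorem min_UB_eq_min_topk (C : ℕ) (hC : 0 < C) (v : Fin C → ℝ)
    (hpos : ∀ c, 0 < v c) (hdec : StrictAnti v) (hsum : ∑ c, v c = 1)
    (X Y : ℝ) (hX : 0 < X) (hY : 0 < Y) :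
    sInf (UB C v X Y '' stdSimplex ℝ (Fin C)) =
      ⨅ i : Fin C, UB C v X Y (qvec C v (topk C ((i : ℕ) + 1))) := by
  have : Nonempty (Fin C) := ⟨⟨0, hC⟩⟩
  have hlow : ∀ p ∈ stdSimplex ℝ (Fin C),
      (⨅ i : Fin C, UB C v X Y (qvec C v (topk C ((i : ℕ) + 1)))) ≤ UB C v X Y p :=
    main_aux C v hpos hdec X Y hX hY _ fun i =>
      ciInf_le (f := fun i : Fin C => UB C v X Y (qvec C v (topk C ((i : ℕ) + 1))))
        (Set.finite_range _).bddBelow i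
  have hq : ∀ i : Fin C, qvec C v (topk C ((i : ℕ) + 1)) ∈ stdSimplex ℝ (Fin C) := by
    intro i
    have hne : (topk C (i + 1)).Nonempty := ⟨i, by simp [topk]⟩
    have hA : 0 < ∑ l ∈ topk C (i + 1), (v l)⁻¹ :=
      Finset.sum_pos (fun l _ => inv_pos.2 (hpos l)) hne
    refine ⟨fun c => ?_, ?_⟩
    · rw [qvec_eq_aux C v hpos]
      have := hpos c
      split_ifs
      · positivity
      · exact le_refl _
    · simp only [qvec_eq_aux C v hpos]
      rw [Finset.sum_ite_mem, Finset.univ_inter, ← Finset.sum_div, div_self hA.ne']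
  apply le_antisymm
  · apply le_ciInf
    intro i
    apply csInf_le
    · refine ⟨⨅ i : Fin C, UB C v X Y (qvec C v (topk C ((i : ℕ) + 1))), ?_⟩
      rintro _ ⟨p, hp, rfl⟩
      exact hlow p hp
    · exact ⟨_, hq i, rfl⟩
  · apply le_csInf
    · exact ⟨_, _, hq ⟨0, hC⟩, rfl⟩
    · rintro _ ⟨p, hp, rfl⟩
      exact hlow p hp
end
end

section
/- For any nonempty subset of contests S ⊆ {1,…,C}, the set Q_S is the convex hull of the equalizing points of all supersets of S: Q_S = conv{q(T) : S ⊆ T ⊆ {1,…,C}}. -/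
open Finset

noncomputable section

/-- `Q_S`: probability vectors for which `v_i p_i` is maximal for every `i ∈ S`. -/
def Qset (C : ℕ) (v : Fin C → ℝ) (S : Finset (Fin C)) : Set (Fin C → ℝ) :=
  {p | p ∈ stdSimplex ℝ (Fin C) ∧ ∀ i ∈ S, v i * p i = ⨆ c, v c * p c}

theorem aux_qvec (C : ℕ) (v : Fin C → ℝ) (hpos : ∀ c, 0 < v c) (T : Finset (Fin C)) (c : Fin C) :
    qvec C v T c = if c ∈ T then (v c)⁻¹ / ∑ l ∈ T, (v l)⁻¹ else 0 := by
  unfold qvec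
  split_ifs with hc
  · have key : ∀ l ∈ T, ∏ j ∈ T.erase l, v j = (∏ j ∈ T, v j) * (v l)⁻¹ := by
      intro l hl
      rw [← Finset.mul_prod_erase T v hl]
      have := (hpos l).ne'
      field_simp
    rw [Finset.sum_congr rfl key, key c hc, ← Finset.mul_sum]
    rw [mul_div_mul_left]
    exact (Finset.prod_pos fun j _ => hpos j).ne'
  · rfl

theorem aux_coin {C : ℕ} (y : Fin C → ℝ) (c : Fin C) :
    ∑ T : Finset (Fin C), (if c ∈ T then (∏ j ∈ T, y j) * ∏ j ∈ univ \ T, (1 - y j) else 0)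
      = y c := by
  have h := Finset.prod_add y (fun j => if j = c then 0 else 1 - y j) univ
  have h2 : ∏ j, (y j + (if j = c then 0 else 1 - y j)) = y c := by
    rw [Finset.prod_eq_single c]
    · simp
    · intro b _ hb
      simp [hb]
    · simp
  rw [h2, Finset.powerset_univ] at h
  rw [h]
  refine Finset.sum_congr rfl fun T _ => ?_
  split_ifs with hc
  · congr 1
    refine Finset.prod_congr rfl fun j hj => ?_
    have : j ≠ c := by
      rintro rfl
      simp [hc] at hj
    simp [this]
  · symm
    apply mul_eq_zero_of_right
    exact Finset.prod_eq_zero (i := c) (by simp [hc]) (by simp)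

theorem aux_mem (C : ℕ) (v : Fin C → ℝ) (S : Finset (Fin C)) (hS : S.Nonempty) (p : Fin C → ℝ) :
    p ∈ Qset C v S ↔ p ∈ stdSimplex ℝ (Fin C) ∧ ∀ i ∈ S, ∀ c, v c * p c ≤ v i * p i := by
  unfold Qset
  refine and_congr_right fun _ => forall₂_congr fun i hi => ?_
  constructor
  · intro h c
    rw [h]
    exact le_ciSup (f := fun c => v c * p c) (Set.finite_range _).bddAbove c
  · intro h
    have : Nonempty (Fin C) := ⟨i⟩
    exact le_antisymm (le_ciSup (f := fun c => v c * p c) (Set.finite_range _).bddAbove i)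
      (ciSup_le h)

/-- Lemma 4: for any nonempty subset of contests `S`, the set `Q_S` is the
convex hull of the equalizing points `q(T)` of all supersets `T ⊇ S`. -/
theorem Qset_eq_convexHull (C : ℕ) (v : Fin C → ℝ)
    (hpos : ∀ c, 0 < v c) (hdec : StrictAnti v) (hsum : ∑ c, v c = 1)
    (S : Finset (Fin C)) (hS : S.Nonempty) :
    Qset C v S = convexHull ℝ ((fun T => qvec C v T) '' {T : Finset (Fin C) | S ⊆ T}) := by
  apply Set.Subset.antisymm
  · intro p hp
    rw [aux_mem C v S hS] at hp
    obtain ⟨⟨hp0, hp1⟩, hmax⟩ := hp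
    obtain ⟨i, hi⟩ := hS
    obtain ⟨M, hM⟩ : ∃ M, M = v i * p i := ⟨_, rfl⟩
    have hM0 : 0 < M := by
      by_contra hcon
      have hz : ∀ c, p c = 0 := by
        intro c
        have h1 := hmax i hi c
        have h2 := hp0 c
        by_contra hne
        have h3 : 0 < p c := lt_of_le_of_ne h2 (Ne.symm hne)
        have h4 := mul_pos (hpos c) h3
        linarith
      simp [hz] at hp1
    have hle : ∀ c, v c * p c ≤ M := fun c => hM ▸ hmax i hi c
    have heq : ∀ c ∈ S, v c * p c = M := fun c hc =>
      le_antisymm (hle c) (hM ▸ hmax c hc i)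
    obtain ⟨y, hy⟩ : ∃ y : Fin C → ℝ, y = fun c => v c * p c / M := ⟨_, rfl⟩
    have hy0 : ∀ c, 0 ≤ y c := fun c => by
      rw [hy]; exact div_nonneg (mul_nonneg (hpos c).le (hp0 c)) hM0.le
    have hy1 : ∀ c, y c ≤ 1 := fun c => by
      rw [hy]; exact (div_le_one hM0).2 (hle c)
    have hyS : ∀ c ∈ S, y c = 1 := fun c hc => by
      simp only [hy, heq c hc]; exact div_self hM0.ne'
    have hyp : ∀ c, M * y c * (v c)⁻¹ = p c := fun c => by
      have := (hpos c).ne'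
      have := hM0.ne'
      simp only [hy]; field_simp
    obtain ⟨w, hw⟩ : ∃ w : Finset (Fin C) → ℝ,
      w = fun T => (∏ j ∈ T, y j) * ∏ j ∈ univ \ T, (1 - y j) := ⟨_, rfl⟩
    have hw0 : ∀ T, 0 ≤ w T := fun T => by
      rw [hw]
      exact mul_nonneg (Finset.prod_nonneg fun j _ => hy0 j)
        (Finset.prod_nonneg fun j _ => sub_nonneg.2 (hy1 j))
    have hwS : ∀ T, ¬ S ⊆ T → w T = 0 := fun T hT => by
      obtain ⟨c, hc, hcT⟩ := Finset.not_subset.1 hT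
      rw [hw]
      apply mul_eq_zero_of_right
      exact Finset.prod_eq_zero (i := c) (by simp [hcT]) (by simp [hyS c hc])
    have hcoin : ∀ c, ∑ T : Finset (Fin C), (if c ∈ T then w T else 0) = y c := fun c => by
      rw [hw]; exact aux_coin y c
    obtain ⟨a, ha⟩ : ∃ a : Finset (Fin C) → ℝ,
      a = fun T => M * w T * ∑ l ∈ T, (v l)⁻¹ := ⟨_, rfl⟩
    have haS : ∀ T, ¬ S ⊆ T → a T = 0 := fun T hT => by
      simp [ha, hwS T hT]
    have ha0 : ∀ T, 0 ≤ a T := fun T => by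
      rw [ha]
      exact mul_nonneg (mul_nonneg hM0.le (hw0 T))
        (Finset.sum_nonneg fun l _ => (inv_pos.2 (hpos l)).le)
    have haq : ∀ T c, a T * qvec C v T c = M * (v c)⁻¹ * (if c ∈ T then w T else 0) := by
      intro T c
      rw [aux_qvec C v hpos, ha]
      split_ifs with hc
      · have : 0 < ∑ l ∈ T, (v l)⁻¹ :=
          Finset.sum_pos (fun l _ => inv_pos.2 (hpos l)) ⟨c, hc⟩
        have h' := this.ne'
        beta_reduce
        generalize (∑ l ∈ T, (v l)⁻¹) = H at *
        field_simp
      · simp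
    have hasum : ∑ T, a T = 1 := by
      have h1 : ∀ T, a T = ∑ c, M * (v c)⁻¹ * (if c ∈ T then w T else 0) := by
        intro T
        rw [ha]
        simp only [mul_ite, mul_zero, Finset.sum_ite_mem, Finset.univ_inter, Finset.mul_sum]
        exact Finset.sum_congr rfl fun c _ => by ring
      simp_rw [h1]
      rw [Finset.sum_comm, ← hp1]
      refine Finset.sum_congr rfl fun c _ => ?_
      rw [← Finset.mul_sum, hcoin, ← hyp c]
      ring
    have hpe : p = ∑ T ∈ univ.filter (fun T => S ⊆ T), a T • qvec C v T := by
      rw [Finset.sum_filter_of_ne]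
      · ext c
        rw [Finset.sum_apply]
        simp only [Pi.smul_apply, smul_eq_mul, haq]
        rw [← Finset.mul_sum, hcoin, ← hyp c]
        ring
      · intro T _ hne
        by_contra hT
        exact hne (by rw [haS T hT, zero_smul])
    rw [hpe]
    refine (convex_convexHull ℝ _).sum_mem (fun T _ => ha0 T) ?_ ?_
    · rw [Finset.sum_filter_of_ne, hasum]
      intro T _ hne
      by_contra hT
      exact hne (haS T hT)
    · intro T hT
      exact subset_convexHull ℝ _ ⟨T, (Finset.mem_filter.1 hT).2, rfl⟩
  · apply convexHull_min
    · rintro _ ⟨T, hT, rfl⟩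
      have hT' : S ⊆ T := hT
      have hH : 0 < ∑ l ∈ T, (v l)⁻¹ :=
        Finset.sum_pos (fun l _ => inv_pos.2 (hpos l)) (hS.mono hT')
      rw [aux_mem C v S hS]
      refine ⟨⟨fun c => ?_, ?_⟩, fun i hi c => ?_⟩
      · simp only [aux_qvec C v hpos]
        split_ifs
        · exact div_nonneg (inv_pos.2 (hpos c)).le hH.le
        · exact le_rfl
      · simp only [aux_qvec C v hpos, Finset.sum_ite_mem, Finset.univ_inter]
        rw [← Finset.sum_div, div_self hH.ne']
      · have e : ∀ c, v c * ((v c)⁻¹ / ∑ l ∈ T, (v l)⁻¹) = 1 / ∑ l ∈ T, (v l)⁻¹ := fun c => by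
          rw [← mul_div_assoc, mul_inv_cancel₀ (hpos c).ne']
        simp only [aux_qvec C v hpos, if_pos (hT' hi), e]
        split_ifs
        · rw [e]
        · rw [mul_zero]; positivity
    · intro p hp q hq a b ha hb hab
      rw [aux_mem C v S hS] at hp hq ⊢
      refine ⟨convex_stdSimplex ℝ _ hp.1 hq.1 ha hb hab, fun i hi c => ?_⟩
      have h1 := mul_le_mul_of_nonneg_left (hp.2 i hi c) ha
      have h2 := mul_le_mul_of_nonneg_left (hq.2 i hi c) hb
      simp only [Pi.add_apply, Pi.smul_apply, smul_eq_mul]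
      linarith
end
end

section
/- For each contest c ∈ {1,…,C}, the function UB is concave on the set Q_{{c}}; that is, for all p, p' ∈ Q_{{c}} and t ∈ [0,1], UB(t·p + (1−t)·p') ≥ t·UB(p) + (1−t)·UB(p'). -/
open Finset

noncomputable section

def GG (X Y s m : ℝ) : ℝ :=
  if Y / X * s ≤ m then 1 - Y / (2 * X) * s ^ 2 / m else 1 - s + X / (2 * Y) * m

lemma GG_le (X Y s m l : ℝ) (hX : 0 < X) (hY : 0 < Y) (hm : 0 < m)
    (h0 : 0 ≤ l) (h1 : l ≤ 1) : GG X Y s m ≤ 1 - l * s + l ^ 2 * (X / (2 * Y) * m) := by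
  unfold GG
  split_ifs with h
  · have : 1 - l * s + l ^ 2 * (X / (2 * Y) * m) - (1 - Y / (2 * X) * s ^ 2 / m)
        = (Y * s - l * X * m) ^ 2 / (2 * X * Y * m) := by
      field_simp
      ring
    have h2 : 0 ≤ (Y * s - l * X * m) ^ 2 / (2 * X * Y * m) := by positivity
    linarith
  · have h3 : X / Y * m ≤ s := by
      have h : m < Y / X * s := not_le.mp h
      rw [div_mul_eq_mul_div, lt_div_iff₀ hX] at h
      rw [div_mul_eq_mul_div, div_le_iff₀ hY]
      linarith
    have e : X / (2 * Y) * m = (X / Y * m) / 2 := by field_simp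
    have hk : 0 < X / Y * m := by positivity
    rw [e]
    generalize X / Y * m = k at *
    nlinarith [mul_nonneg (sub_nonneg.2 h1) (sub_nonneg.2 h3),
      mul_nonneg (mul_nonneg (sub_nonneg.2 h1) (sub_nonneg.2 h1)) hk.le]

lemma GG_eq (X Y s m : ℝ) (hX : 0 < X) (hY : 0 < Y) (hm : 0 < m) (hs : 0 ≤ s) :
    ∃ l, 0 ≤ l ∧ l ≤ 1 ∧ GG X Y s m = 1 - l * s + l ^ 2 * (X / (2 * Y) * m) := by
  unfold GG
  split_ifs with h
  · refine ⟨Y / X * s / m, by positivity, (div_le_one hm).2 h, ?_⟩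
    field_simp
    ring
  · exact ⟨1, zero_le_one, le_rfl, by ring⟩

lemma Q_facts (C : ℕ) (v : Fin C → ℝ) (hpos : ∀ c, 0 < v c) (c : Fin C)
    (p : Fin C → ℝ) (hp : p ∈ Qset C v {c}) :
    (⨆ i, v i * p i) = v c * p c ∧ (∀ i, v i * p i ≤ v c * p c) ∧ 0 < v c * p c ∧
      0 ≤ ∑ i, v i * p i := by
  obtain ⟨⟨hn, h1⟩, hm⟩ := hp
  have e := hm c (by simp)
  have hle : ∀ i, v i * p i ≤ v c * p c := fun i => by
    rw [e]
    exact le_ciSup (f := fun i => v i * p i) (Set.finite_range _).bddAbove i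
  refine ⟨e.symm, hle, ?_, sum_nonneg fun i _ => mul_nonneg (hpos i).le (hn i)⟩
  by_contra hc
  have hz : ∀ i, p i = 0 := fun i => by
    have := hle i
    have h2 : v i * p i ≤ 0 := by linarith
    exact le_antisymm (by have := hpos i; by_contra h3; nlinarith [mul_pos this (not_le.1 h3)]) (hn i)
  simp [hz] at h1

/-- Lemma 6: for each contest `c`, the function `UB` is concave on the set
`Q_{{c}}`. -/
theorem UB_concave_on_Qc (C : ℕ) (v : Fin C → ℝ)
    (hpos : ∀ c, 0 < v c) (hdec : StrictAnti v) (hsum : ∑ c, v c = 1)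
    (X Y : ℝ) (hX : 0 < X) (hY : 0 < Y) (c : Fin C)
    (p p' : Fin C → ℝ) (hp : p ∈ Qset C v {c}) (hp' : p' ∈ Qset C v {c})
    (t : ℝ) (ht : t ∈ Set.Icc (0 : ℝ) 1) :
    t * UB C v X Y p + (1 - t) * UB C v X Y p' ≤
      UB C v X Y (fun i => t * p i + (1 - t) * p' i) := by
  obtain ⟨e1, l1, m1, s1⟩ := Q_facts C v hpos c p hp
  obtain ⟨e2, l2, m2, s2⟩ := Q_facts C v hpos c p' hp'
  obtain ⟨t0, t1⟩ := ht
  have u0 : 0 ≤ 1 - t := sub_nonneg.2 t1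
  have e3 : (⨆ i, v i * (t * p i + (1 - t) * p' i)) = t * (v c * p c) + (1 - t) * (v c * p' c) := by
    haveI : Nonempty (Fin C) := ⟨c⟩
    apply le_antisymm
    · refine ciSup_le fun i => ?_
      have := mul_le_mul_of_nonneg_left (l1 i) t0
      have := mul_le_mul_of_nonneg_left (l2 i) u0
      linarith
    · refine le_trans (le_of_eq ?_)
        (le_ciSup (f := fun i => v i * (t * p i + (1 - t) * p' i)) (Set.finite_range _).bddAbove c)
      ring
  have e4 : (∑ i, v i * (t * p i + (1 - t) * p' i))
      = t * (∑ i, v i * p i) + (1 - t) * (∑ i, v i * p' i) := by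
    rw [mul_sum, mul_sum, ← sum_add_distrib]
    exact sum_congr rfl fun i _ => by ring
  have g1 : UB C v X Y p = GG X Y (∑ i, v i * p i) (v c * p c) := by
    rw [← e1]; rfl
  have g2 : UB C v X Y p' = GG X Y (∑ i, v i * p' i) (v c * p' c) := by
    rw [← e2]; rfl
  have g3 : UB C v X Y (fun i => t * p i + (1 - t) * p' i)
      = GG X Y (t * (∑ i, v i * p i) + (1 - t) * (∑ i, v i * p' i))
        (t * (v c * p c) + (1 - t) * (v c * p' c)) := by
    rw [← e3, ← e4]; rfl
  rw [g1, g2, g3]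
  generalize (∑ i, v i * p i) = a at *
  generalize (∑ i, v i * p' i) = b at *
  generalize v c * p c = m at *
  generalize v c * p' c = n at *
  have hmn : 0 < t * m + (1 - t) * n := by
    rcases t0.eq_or_lt with h | h
    · subst h; simpa using m2
    · have := mul_pos h m1
      have := mul_nonneg u0 m2.le
      linarith
  obtain ⟨l, h0, h1, hl⟩ := GG_eq X Y (t * a + (1 - t) * b) (t * m + (1 - t) * n) hX hY hmn
    (by positivity)
  rw [hl]
  have A := mul_le_mul_of_nonneg_left (GG_le X Y a m l hX hY m1 h0 h1) t0
  have B := mul_le_mul_of_nonneg_left (GG_le X Y b n l hX hY m2 h0 h1) u0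
  refine (add_le_add A B).trans (le_of_eq ?_)
  ring
end
end

section
/- There exists a nonempty subset S ⊆ {1,…,C} such that the equalizing point q(S) minimizes UB over the probability simplex: UB(q(S)) ≤ UB(p) for every p ∈ Δ. -/
open Finset

noncomputable section

lemma aux_q (C : ℕ) (v : Fin C → ℝ) (hpos : ∀ c, 0 < v c) (S : Finset (Fin C))
    (c : Fin C) :
    v c * qvec C v S c = if c ∈ S then 1 / (∑ l ∈ S, 1 / v l) else 0 := by
  unfold qvec
  split_ifs with hc
  · have hP : 0 < ∏ j ∈ S, v j := Finset.prod_pos fun j _ => hpos j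
    have h1 : ∀ l ∈ S, ∏ j ∈ S.erase l, v j = (∏ j ∈ S, v j) * (1 / v l) := by
      intro l hl
      rw [← Finset.mul_prod_erase S v hl]
      have := (hpos l).ne'
      field_simp
    have hE : 0 < ∑ l ∈ S, 1 / v l :=
      Finset.sum_pos (fun l _ => one_div_pos.mpr (hpos l)) ⟨c, hc⟩
    rw [Finset.sum_congr rfl h1, ← Finset.mul_sum, h1 c hc]
    have := (hpos c).ne'
    have h2 := hP.ne'
    have h3 := hE.ne'
    generalize (∑ l ∈ S, 1 / v l) = E at *
    field_simp
  · simp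

lemma aux_le (r s m t : ℝ) (hr : 0 < r) (hm : 0 < m) (ht1 : r * t ≤ 1) :
    (if r * s ≤ m then 1 - r / 2 * s ^ 2 / m else 1 - s + 1 / (2 * r) * m)
      ≤ 1 - r * t * s + r / 2 * t ^ 2 * m := by
  split_ifs with h
  · have : 1 - r * t * s + r / 2 * t ^ 2 * m - (1 - r / 2 * s ^ 2 / m)
        = r / (2 * m) * (s - t * m) ^ 2 := by
      field_simp
      ring
    have h2 : 0 ≤ r / (2 * m) * (s - t * m) ^ 2 := by positivity
    linarith
  · push Not at h
    have : 1 - r * t * s + r / 2 * t ^ 2 * m - (1 - s + 1 / (2 * r) * m)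
        = 1 / (2 * r) * ((1 - r * t) * (2 * (r * s) - (1 + r * t) * m)) := by
      field_simp
      ring
    have h3 : 0 ≤ 2 * (r * s) - (1 + r * t) * m := by nlinarith
    have h2 : 0 ≤ 1 / (2 * r) * ((1 - r * t) * (2 * (r * s) - (1 + r * t) * m)) :=
      mul_nonneg (by positivity) (mul_nonneg (by linarith) h3)
    linarith

lemma aux_ex (r s m : ℝ) (hr : 0 < r) (hm : 0 < m) :
    ∃ t, r * t ≤ 1 ∧
    (if r * s ≤ m then 1 - r / 2 * s ^ 2 / m else 1 - s + 1 / (2 * r) * m)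
      = 1 - r * t * s + r / 2 * t ^ 2 * m := by
  split_ifs with h
  · refine ⟨s / m, ?_, ?_⟩
    · rw [← mul_div_assoc, div_le_one hm]; exact h
    · field_simp
      ring
  · refine ⟨1 / r, ?_, ?_⟩
    · field_simp
      exact le_refl _
    · field_simp

lemma aux_UB (C : ℕ) (v : Fin C → ℝ) (X Y : ℝ) (hX : 0 < X) (hY : 0 < Y) (p : Fin C → ℝ) :
    UB C v X Y p = if Y / X * (∑ c, v c * p c) ≤ ⨆ c, v c * p c then
      1 - (Y / X) / 2 * (∑ c, v c * p c) ^ 2 / (⨆ c, v c * p c)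
      else 1 - (∑ c, v c * p c) + 1 / (2 * (Y / X)) * (⨆ c, v c * p c) := by
  unfold UB
  have h1 : Y / (2 * X) = (Y / X) / 2 := by field_simp
  have h2 : X / (2 * Y) = 1 / (2 * (Y / X)) := by field_simp
  rw [h1, h2]

/-- Lemma 7: some equalizing point `q(S)` minimizes `UB` over the
probability simplex. -/
theorem exists_equalizing_minimizer (C : ℕ) (hC : 0 < C) (v : Fin C → ℝ)
    (hpos : ∀ c, 0 < v c) (hdec : StrictAnti v) (hsum : ∑ c, v c = 1)
    (X Y : ℝ) (hX : 0 < X) (hY : 0 < Y) :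
    ∃ S : Finset (Fin C), S.Nonempty ∧
      ∀ p ∈ stdSimplex ℝ (Fin C), UB C v X Y (qvec C v S) ≤ UB C v X Y p := by
  have hr : 0 < Y / X := by positivity
  obtain ⟨S, hS, hmin⟩ := Finset.exists_min_image
    ((Finset.univ : Finset (Finset (Fin C))).filter (fun S => S.Nonempty))
    (fun S => UB C v X Y (qvec C v S))
    ⟨{⟨0, hC⟩}, by simp⟩
  simp only [Finset.mem_filter, Finset.mem_univ, true_and] at hS hmin
  refine ⟨S, hS, fun p hp => ?_⟩
  generalize UB C v X Y (qvec C v S) = L at hmin ⊢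
  obtain ⟨hp0, hp1⟩ := hp
  have hbd : ∀ w : Fin C → ℝ, BddAbove (Set.range w) := fun w => (Set.finite_range w).bddAbove
  have hm : 0 < ⨆ c, v c * p c := by
    obtain ⟨c, _, hc⟩ : ∃ c ∈ (Finset.univ : Finset (Fin C)), 0 < p c := by
      by_contra! hcon
      have := Finset.sum_nonpos hcon
      linarith
    exact lt_of_lt_of_le (mul_pos (hpos c) hc) (le_ciSup (hbd fun c => v c * p c) c)
  have hle : ∀ c, v c * p c ≤ ⨆ c, v c * p c := le_ciSup (hbd fun c => v c * p c)
  rw [aux_UB C v X Y hX hY]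
  obtain ⟨t, ht, heq⟩ := aux_ex (Y / X) (∑ c, v c * p c) _ hr hm
  rw [heq]
  generalize (⨆ c, v c * p c) = m at *
  have key : ∀ T : Finset (Fin C), T.Nonempty →
      ∑ c ∈ T, (Y / X * t + (L - 1) / v c) ≤ Y / X / 2 * t ^ 2 := by
    intro T hT
    have hE : 0 < ∑ l ∈ T, 1 / v l :=
      Finset.sum_pos (fun l _ => one_div_pos.mpr (hpos l)) hT
    have h := hmin T hT
    rw [aux_UB C v X Y hX hY] at h
    simp only [aux_q C v hpos T] at h
    have hsup : (⨆ c, if c ∈ T then 1 / (∑ l ∈ T, 1 / v l) else 0) = 1 / (∑ l ∈ T, 1 / v l) := by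
      obtain ⟨c, hc⟩ := hT
      haveI : Nonempty (Fin C) := ⟨c⟩
      apply le_antisymm
      · apply ciSup_le
        intro d
        split_ifs
        · exact le_refl _
        · positivity
      · have := le_ciSup (hbd fun c => if c ∈ T then 1 / (∑ l ∈ T, 1 / v l) else 0) c
        simpa [hc] using this
    have hs : (∑ c, if c ∈ T then 1 / (∑ l ∈ T, 1 / v l) else 0)
        = (T.card : ℝ) * (1 / (∑ l ∈ T, 1 / v l)) := by
      rw [Finset.sum_ite_mem, Finset.univ_inter, Finset.sum_const, nsmul_eq_mul]
    rw [hsup, hs] at h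
    have h2 := h.trans (aux_le (Y / X) _ _ t hr (one_div_pos.mpr hE) ht)
    have h3 : ∑ c ∈ T, (Y / X * t + (L - 1) / v c)
        = T.card * (Y / X * t) + (L - 1) * ∑ l ∈ T, 1 / v l := by
      rw [Finset.sum_add_distrib, Finset.sum_const, nsmul_eq_mul, Finset.mul_sum]
      simp only [mul_one_div]
    rw [h3]
    generalize (∑ l ∈ T, 1 / v l) = E at *
    have h4 := mul_le_mul_of_nonneg_right h2 hE.le
    have h5 : (1 - Y / X * t * (T.card * (1 / E)) + Y / X / 2 * t ^ 2 * (1 / E)) * E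
        = E - Y / X * t * T.card + Y / X / 2 * t ^ 2 := by
      have := hE.ne'
      generalize Y / X = r
      field_simp
    rw [h5] at h4
    linarith
  have hw : ∑ c, v c * p c * (Y / X * t + (L - 1) / v c)
      = Y / X * t * (∑ c, v c * p c) + (L - 1) := by
    have : ∀ c, v c * p c * (Y / X * t + (L - 1) / v c)
        = Y / X * t * (v c * p c) + (L - 1) * p c := by
      intro c
      have := (hpos c).ne'
      generalize Y / X = r
      field_simp
    rw [Finset.sum_congr rfl fun c _ => this c, Finset.sum_add_distrib, ← Finset.mul_sum,
      ← Finset.mul_sum, hp1, mul_one]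
  have hfin : ∑ c, v c * p c * (Y / X * t + (L - 1) / v c) ≤ m * (Y / X / 2 * t ^ 2) := by
    set k : Fin C → ℝ := fun c => Y / X * t + (L - 1) / v c with hk
    have h1 : ∑ c, v c * p c * k c ≤ ∑ c, if 0 < k c then m * k c else 0 := by
      apply Finset.sum_le_sum
      intro c _
      split_ifs with h
      · exact mul_le_mul_of_nonneg_right (hle c) h.le
      · exact mul_nonpos_of_nonneg_of_nonpos (mul_nonneg (hpos c).le (hp0 c)) (not_lt.mp h)
    refine h1.trans ?_
    rw [← Finset.sum_filter, ← Finset.mul_sum]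
    apply mul_le_mul_of_nonneg_left _ hm.le
    rcases (Finset.univ.filter fun c => 0 < k c).eq_empty_or_nonempty with h | h
    · rw [h, Finset.sum_empty]; positivity
    · exact key _ h
  rw [hw] at hfin
  linarith
end
end

section
/- For any k ∈ {1,…,C} and any subset S ⊆ {1,…,C} with |S| = k, the effective value of the top-k set dominates: (∏_{j∈[k]} v_j)/(Σ_{ℓ∈[k]} ∏_{j∈[k]∖{ℓ}} v_j) ≥ (∏_{j∈S} v_j)/(Σ_{ℓ∈S} ∏_{j∈S∖{ℓ}} v_j). -/
open Finset

noncomputable section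

theorem eff_eq {C : ℕ} (v : Fin C → ℝ) (hpos : ∀ c, 0 < v c) (S : Finset (Fin C)) :
    (∏ j ∈ S, v j) / (∑ l ∈ S, ∏ j ∈ S.erase l, v j) = (∑ l ∈ S, (v l)⁻¹)⁻¹ := by
  have hP : (∏ j ∈ S, v j) ≠ 0 := Finset.prod_ne_zero_iff.2 fun c _ => (hpos c).ne'
  have h : ∑ l ∈ S, ∏ j ∈ S.erase l, v j = (∏ j ∈ S, v j) * ∑ l ∈ S, (v l)⁻¹ := by
    rw [Finset.mul_sum]
    refine Finset.sum_congr rfl fun l hl => ?_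
    rw [← Finset.mul_prod_erase S v hl]
    have := (hpos l).ne'
    field_simp
  rw [h, div_mul_eq_div_div, div_self hP, one_div]

/-- for any size-`k` subset `S`, the effective value of the top-`k` set
dominates that of `S`. -/
theorem topk_effective_value_dominates (C : ℕ) (v : Fin C → ℝ)
    (hpos : ∀ c, 0 < v c) (hdec : StrictAnti v) (hsum : ∑ c, v c = 1)
    (k : ℕ) (hk1 : 1 ≤ k) (hk2 : k ≤ C) (S : Finset (Fin C)) (hcard : S.card = k) :
    (∏ j ∈ S, v j) / (∑ l ∈ S, ∏ j ∈ S.erase l, v j) ≤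
      (∏ j ∈ topk C k, v j) / (∑ l ∈ topk C k, ∏ j ∈ (topk C k).erase l, v j) := by
  rw [eff_eq v hpos, eff_eq v hpos]
  have hT : (topk C k).card = k := by
    rw [topk, Fin.card_filter_val_lt]
    omega
  have hmem : ∀ c, c ∈ topk C k ↔ (c : ℕ) < k := fun c => by simp [topk]
  have hne : (topk C k).Nonempty := by
    rw [← Finset.card_pos]; omega
  apply inv_anti₀ (Finset.sum_pos (fun c _ => inv_pos.2 (hpos c)) hne)
  have hc : (topk C k \ S).card = (S \ topk C k).card :=
    Finset.card_sdiff_comm (hT.trans hcard.symm)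
  let m : Fin C := ⟨k - 1, by omega⟩
  have h1 : ∑ c ∈ topk C k \ S, (v c)⁻¹ ≤ (topk C k \ S).card • (v m)⁻¹ := by
    refine Finset.sum_le_card_nsmul _ _ _ fun c hcm => ?_
    have := (hmem c).1 (Finset.mem_sdiff.1 hcm).1
    refine inv_anti₀ (hpos m) (hdec.antitone ?_)
    rw [Fin.le_def]; change (c : ℕ) ≤ k - 1; omega
  have h2 : (S \ topk C k).card • (v m)⁻¹ ≤ ∑ c ∈ S \ topk C k, (v c)⁻¹ := by
    refine Finset.card_nsmul_le_sum _ _ _ fun c hcm => ?_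
    have := mt (hmem c).2 (Finset.mem_sdiff.1 hcm).2
    refine inv_anti₀ (hpos c) (hdec.antitone ?_)
    rw [Fin.le_def]; change k - 1 ≤ (c : ℕ); omega
  rw [← Finset.sum_inter_add_sum_sdiff (topk C k) S, ← Finset.sum_inter_add_sum_sdiff S (topk C k),
    Finset.inter_comm S]
  rw [hc] at h1
  linarith
end
end

section
/- In the generalized restricted game RL^K(X,Y;v), for every α ∈ Δ with all coordinates strictly positive and every δ ∈ [0,1], the max-min value of player X satisfies sup_{F_X ∈ 𝔽(X)} inf_{F_Y ∈ 𝔽^K(Y)} π_X(F_X,F_Y) ≥ 1 − max_{S ⊆ {1,…,C}, |S| = K} H_S(α,δ), where H_S(α,δ) := (Σ_{c∈S} v_c)·(1−δ) + δ²·(Y/(2X))·max_{c∈S} (v_c/α_c). -/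
open MeasureTheory Finset

noncomputable section

/-- Nonnegative allocations with at most `K` positive coordinates. -/
def RK (C K : ℕ) : Set (Fin C → ℝ) :=
  {y | (∀ c, 0 ≤ y c) ∧ {c : Fin C | 0 < y c}.ncard ≤ K}

/-- Restricted strategies: admissible strategies concentrated on `R^K`. -/
def StratK (C K : ℕ) (B : ℝ) : Set (Measure (Fin C → ℝ)) :=
  {μ | μ ∈ Strat C B ∧ μ (RK C K) = 1}

lemma aux_poly (m e v H : ℝ) (hm : 0 < m) (he0 : 0 ≤ e) (he1 : e ≤ 1) (hv : e * m ≤ v)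
    (h : H = (1 + e) * m / 2 ∨ (v ≤ m ∧ (1 + e) * m / 2 ≤ H)) :
    (v - e * m) ^ 2 * (H - e * v) ≤ (1 - e) ^ 2 * v ^ 2 * (H - e * m) := by
  have key : (v - e * m) ^ 2 * ((1 + e) * m / 2 - e * v)
      ≤ (1 - e) ^ 2 * v ^ 2 * ((1 + e) * m / 2 - e * m) := by
    have h1 : 0 ≤ 2 * e * v - e ^ 2 * (1 + e) * m := by
      have : 0 ≤ 2 * e * (v - e * m) + e ^ 2 * (1 - e) * m := by
        have := sub_nonneg.2 hv
        have := sub_nonneg.2 he1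
        positivity
      nlinarith
    have h2 := mul_nonneg (sq_nonneg (v - m)) h1
    nlinarith
  rcases h with h | ⟨h1, h2⟩
  · rw [h]; exact key
  · have h3 : (v - e * m) ^ 2 ≤ ((1 - e) * v) ^ 2 := by
      apply pow_le_pow_left₀ (by linarith)
      nlinarith
    nlinarith [mul_nonneg (sub_nonneg.2 h3) (sub_nonneg.2 h2)]

lemma aux_RK_meas (C K : ℕ) : MeasurableSet (RK C K) := by
  have : RK C K = (⋂ c, {y : Fin C → ℝ | 0 ≤ y c}) ∩
      ⋃ T ∈ {T : Finset (Fin C) | T.card ≤ K}, ⋂ c ∈ {c | c ∉ T}, {y : Fin C → ℝ | y c ≤ 0} := by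
    ext y
    simp only [RK, Set.mem_setOf_eq, Set.mem_inter_iff, Set.mem_iInter, Set.mem_iUnion]
    refine and_congr_right fun _ => ⟨fun h => ?_, ?_⟩
    · refine ⟨Finset.univ.filter (fun c => 0 < y c), ?_, ?_⟩
      · rw [← Set.ncard_coe_finset]; simpa using h
      · intro c hc; simpa using hc
    · rintro ⟨T, hT, h⟩
      refine le_trans ?_ hT
      rw [← Set.ncard_coe_finset]
      apply Set.ncard_le_ncard _ (Finset.finite_toSet T)
      intro c hc
      by_contra h'
      exact absurd (h c h') (not_le.2 hc)
  rw [this]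
  refine MeasurableSet.inter (MeasurableSet.iInter fun c => measurableSet_le measurable_const (measurable_pi_apply c)) ?_
  refine MeasurableSet.biUnion (Set.to_countable _) fun T _ => ?_
  exact MeasurableSet.biInter (Set.to_countable _) fun c _ => measurableSet_le (measurable_pi_apply c) measurable_const

/-- the strategy curve -/
def xcurve (C : ℕ) (v a : Fin C → ℝ) (B : ℝ) (θ : ℝ) : Fin C → ℝ :=
  fun c => max (θ * v c - a c) 0 / B

lemma xcurve_meas (C : ℕ) (v a : Fin C → ℝ) (B : ℝ) : Measurable (xcurve C v a B) := by
  unfold xcurve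
  fun_prop

lemma aux_int (v a : ℝ) (hv : 0 < v) (ha0 : 0 ≤ a) (hav : a ≤ v) :
    ∫ θ in Set.Icc (0:ℝ) 1, max (θ * v - a) 0 = (v - a) ^ 2 / (2 * v) := by
  rw [integral_Icc_eq_integral_Ioc, ← intervalIntegral.integral_of_le zero_le_one]
  have hc : Continuous (fun θ : ℝ => max (θ * v - a) 0) := by fun_prop
  rw [← intervalIntegral.integral_add_adjacent_intervals (b := a / v)
    (hc.intervalIntegrable _ _) (hc.intervalIntegrable _ _)]
  have h0 : 0 ≤ a / v := by positivity
  have h1 : a / v ≤ 1 := by rw [div_le_one hv]; exact hav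
  have e1 : ∫ θ in (0:ℝ)..(a / v), max (θ * v - a) 0 = ∫ θ in (0:ℝ)..(a / v), (0:ℝ) := by
    apply intervalIntegral.integral_congr
    intro θ hθ
    rw [Set.uIcc_of_le h0] at hθ
    have := (le_div_iff₀ hv).1 hθ.2
    simp only
    exact max_eq_right (by linarith)
  have e2 : ∫ θ in (a / v)..1, max (θ * v - a) 0 = ∫ θ in (a / v)..1, (θ * v - a) := by
    apply intervalIntegral.integral_congr
    intro θ hθ
    rw [Set.uIcc_of_le h1] at hθ
    have := (div_le_iff₀ hv).1 hθ.1
    simp only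
    exact max_eq_left (by linarith)
  rw [e1, e2, intervalIntegral.integral_sub (Continuous.intervalIntegrable (by fun_prop) _ _)
    (Continuous.intervalIntegrable (by fun_prop) _ _), intervalIntegral.integral_mul_const]
  simp
  field_simp
  ring

instance aux_prob : IsProbabilityMeasure (volume.restrict (Set.Icc (0:ℝ) 1)) :=
  ⟨by simp⟩

lemma aux_strat (C : ℕ) (v a : Fin C → ℝ) (B X : ℝ) (hB : 0 < B)
    (hpos : ∀ c, 0 < v c) (ha0 : ∀ c, 0 ≤ a c) (hav : ∀ c, a c ≤ v c)
    (hX : ∑ c, (v c - a c) ^ 2 / (2 * v c) ≤ B * X) :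
    (volume.restrict (Set.Icc (0:ℝ) 1)).map (xcurve C v a B) ∈ Strat C X := by
  have hm := xcurve_meas C v a B
  have hnn : ∀ θ c, 0 ≤ xcurve C v a B θ c := fun θ c =>
    div_nonneg (le_max_right _ _) hB.le
  refine ⟨Measure.isProbabilityMeasure_map hm.aemeasurable, ?_, ?_⟩
  · rw [Measure.map_apply hm]
    · have : xcurve C v a B ⁻¹' {x | ∀ c, 0 ≤ x c} = Set.univ := by
        ext θ; simp [hnn]
      rw [this]; exact measure_univ
    · simp only [Set.setOf_forall]
      exact MeasurableSet.iInter fun c => measurableSet_le measurable_const (measurable_pi_apply c)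
  · rw [lintegral_map (by fun_prop) hm]
    have hint : ∀ c, IntegrableOn (fun θ => xcurve C v a B θ c) (Set.Icc (0:ℝ) 1) := fun c => by
      apply Continuous.integrableOn_Icc
      unfold xcurve; fun_prop
    rw [← ofReal_integral_eq_lintegral_ofReal (integrable_finsetSum _ fun c _ => hint c)
      (Filter.Eventually.of_forall fun θ => Finset.sum_nonneg fun c _ => hnn θ c)]
    apply ENNReal.ofReal_le_ofReal
    rw [integral_finsetSum _ fun c _ => hint c]
    have : ∀ c, ∫ θ in Set.Icc (0:ℝ) 1, xcurve C v a B θ c = (v c - a c) ^ 2 / (2 * v c) / B := by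
      intro c
      unfold xcurve
      rw [integral_div, aux_int _ _ (hpos c) (ha0 c) (hav c)]
    simp only [this]
    rw [← Finset.sum_div, div_le_iff₀ hB]
    linarith

/-- indicator payoff -/
def ind (C : ℕ) (v : Fin C → ℝ) (x y : Fin C → ℝ) : ℝ := ∑ c, if y c ≤ x c then v c else 0

lemma ind_nonneg (C : ℕ) (v : Fin C → ℝ) (hpos : ∀ c, 0 < v c) (x y : Fin C → ℝ) :
    0 ≤ ind C v x y := by
  apply Finset.sum_nonneg
  intro c _
  split_ifs
  · exact (hpos c).le
  · exact le_rfl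

lemma ind_le (C : ℕ) (v : Fin C → ℝ) (hpos : ∀ c, 0 < v c) (hsum : ∑ c, v c = 1)
    (x y : Fin C → ℝ) : ind C v x y ≤ 1 := by
  rw [← hsum]
  apply Finset.sum_le_sum
  intro c _
  split_ifs
  · exact le_rfl
  · exact (hpos c).le

lemma ind_meas (C : ℕ) (v : Fin C → ℝ) :
    Measurable (fun p : (Fin C → ℝ) × (Fin C → ℝ) => ind C v p.1 p.2) := by
  unfold ind
  refine Finset.measurable_sum _ fun c _ => ?_
  refine Measurable.ite (measurableSet_le ?_ ?_) measurable_const measurable_const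
  · fun_prop
  · fun_prop

lemma ind_integrable (C : ℕ) (v : Fin C → ℝ) (hpos : ∀ c, 0 < v c) (hsum : ∑ c, v c = 1)
    (F G : Measure (Fin C → ℝ)) [IsProbabilityMeasure F] [IsProbabilityMeasure G] :
    Integrable (fun p : (Fin C → ℝ) × (Fin C → ℝ) => ind C v p.1 p.2) (F.prod G) := by
  apply Integrable.of_bound (ind_meas C v).aestronglyMeasurable 1
  refine Filter.Eventually.of_forall fun p => ?_
  rw [Real.norm_eq_abs, abs_of_nonneg (ind_nonneg C v hpos _ _)]
  exact ind_le C v hpos hsum _ _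

lemma payoff_bound (C : ℕ) (v : Fin C → ℝ) (hpos : ∀ c, 0 < v c) (hsum : ∑ c, v c = 1)
    (F G : Measure (Fin C → ℝ)) [IsProbabilityMeasure F] [IsProbabilityMeasure G] :
    ‖payoff C v F G‖ ≤ 1 := by
  have h1 : ∀ x, ‖∫ y, ind C v x y ∂G‖ ≤ 1 := fun x => by
    have := norm_integral_le_of_norm_le_const (μ := G) (f := fun y => ind C v x y) (C := 1)
      (Filter.Eventually.of_forall fun y => by
        rw [Real.norm_eq_abs, abs_of_nonneg (ind_nonneg C v hpos _ _)]
        exact ind_le C v hpos hsum _ _)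
    simpa using this
  have := norm_integral_le_of_norm_le_const (μ := F) (f := fun x => ∫ y, ind C v x y ∂G) (C := 1)
    (Filter.Eventually.of_forall h1)
  simpa [payoff, ind] using this

lemma aux_theta (v a B y : ℝ) (hv : 0 < v) (hB : 0 < B) (ha : 0 ≤ a) (hy : 0 ≤ y) :
    v - (if 0 < y then a else 0) - B * y ≤
      ∫ θ in Set.Icc (0:ℝ) 1, (if y ≤ max (θ * v - a) 0 / B then v else 0) := by
  rcases hy.eq_or_lt with rfl | hy
  · have : ∀ θ : ℝ, 0 ≤ max (θ * v - a) 0 / B := fun θ => div_nonneg (le_max_right _ _) hB.le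
    simp [this]
  · rw [if_pos hy]
    have hms : MeasurableSet {θ : ℝ | y ≤ max (θ * v - a) 0 / B} :=
      measurableSet_le measurable_const (by fun_prop)
    have hint : Integrable (fun θ : ℝ => if y ≤ max (θ * v - a) 0 / B then v else 0)
        (volume.restrict (Set.Icc (0:ℝ) 1)) := by
      apply Integrable.of_bound (Measurable.ite hms measurable_const measurable_const).aestronglyMeasurable v
      refine Filter.Eventually.of_forall fun p => ?_
      split_ifs <;> simp [abs_of_pos hv, hv.le]
    set s := (a + B * y) / v with hs
    have hs0 : 0 ≤ s := by positivity
    rcases le_or_gt s 1 with h1 | h1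
    · have hI : ∫ θ in Set.Icc (0:ℝ) 1, (Set.Icc s 1).indicator (fun _ => v) θ = (1 - s) * v := by
        rw [integral_indicator measurableSet_Icc, Measure.restrict_restrict measurableSet_Icc,
          Set.Icc_inter_Icc]
        simp [hs0, h1]
      have : v - a - B * y = (1 - s) * v := by rw [hs]; field_simp; ring
      rw [this, ← hI]
      refine integral_mono ?_ hint ?_
      · exact (integrable_const v).indicator measurableSet_Icc
      · intro θ
        by_cases hθ : θ ∈ Set.Icc s 1
        · have h2 := (div_le_iff₀ hv).1 hθ.1
          have : y ≤ max (θ * v - a) 0 / B := by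
            rw [le_div_iff₀ hB]
            exact le_trans (by linarith) (le_max_left _ _)
          simp [hθ, this]
        · simp only [Set.indicator_of_notMem hθ]
          split_ifs
          · exact hv.le
          · exact le_rfl
    · have : v - a - B * y ≤ 0 := by
        have := (lt_div_iff₀ hv).1 h1
        linarith
      refine this.trans (integral_nonneg fun θ => ?_)
      simp only [Pi.zero_apply]
      split_ifs
      · exact hv.le
      · exact le_rfl

lemma aux_payoff (C K : ℕ) (v a : Fin C → ℝ) (A B Y : ℝ) (hB : 0 < B) (hY : 0 < Y)
    (hpos : ∀ c, 0 < v c) (hsum : ∑ c, v c = 1) (ha0 : ∀ c, 0 ≤ a c)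
    (hA : ∀ S : Finset (Fin C), S.card ≤ K → ∑ c ∈ S, a c ≤ A)
    (G : Measure (Fin C → ℝ)) (hG : G ∈ StratK C K Y) :
    1 - A - B * Y ≤ payoff C v ((volume.restrict (Set.Icc (0:ℝ) 1)).map (xcurve C v a B)) G := by
  obtain ⟨⟨hGp, -, hGb⟩, hGK⟩ := hG
  have hm := xcurve_meas C v a B
  haveI : IsProbabilityMeasure ((volume.restrict (Set.Icc (0:ℝ) 1)).map (xcurve C v a B)) :=
    Measure.isProbabilityMeasure_map hm.aemeasurable
  have hae : ∀ᵐ y ∂G, y ∈ RK C K := (mem_ae_iff_prob_eq_one (aux_RK_meas C K)).2 hGK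
  have hnn : 0 ≤ᵐ[G] fun y => ∑ c, y c := by
    filter_upwards [hae] with y hy
    exact Finset.sum_nonneg fun c _ => hy.1 c
  have hYint : Integrable (fun y : Fin C → ℝ => ∑ c, y c) G := by
    refine ⟨by fun_prop, ?_⟩
    rw [hasFiniteIntegral_iff_ofReal hnn]
    exact hGb.trans_lt ENNReal.ofReal_lt_top
  have hYle : ∫ y, ∑ c, y c ∂G ≤ Y := by
    rw [← ofReal_integral_eq_lintegral_ofReal hYint hnn] at hGb
    exact (ENNReal.ofReal_le_ofReal_iff hY.le).1 hGb
  have hii := ind_integrable C v hpos hsum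
    ((volume.restrict (Set.Icc (0:ℝ) 1)).map (xcurve C v a B)) G
  have hpay : payoff C v ((volume.restrict (Set.Icc (0:ℝ) 1)).map (xcurve C v a B)) G
      = ∫ y, ∫ x, ind C v x y ∂((volume.restrict (Set.Icc (0:ℝ) 1)).map (xcurve C v a B)) ∂G := by
    rw [← integral_integral_swap (f := fun x y => ind C v x y) hii]
    rfl
  rw [hpay]
  have hlow : 1 - A - B * Y ≤ ∫ y, (1 - A - B * ∑ c, y c) ∂G := by
    rw [integral_sub (integrable_const _) (hYint.const_mul B), integral_const_mul]
    simp only [integral_const, probReal_univ, one_smul]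
    nlinarith
  refine hlow.trans (integral_mono_ae ((integrable_const _).sub (hYint.const_mul B))
    hii.integral_prod_right ?_)
  filter_upwards [hae] with y hy
  have hmy : Measurable (fun x => ind C v x y) := (ind_meas C v).comp (by fun_prop : Measurable fun x : Fin C → ℝ => (x, y))
  rw [integral_map hm.aemeasurable hmy.aestronglyMeasurable]
  unfold ind
  rw [integral_finsetSum]
  · have h1 : ∑ c, (v c - (if 0 < y c then a c else 0) - B * y c) ≤
        ∑ c, ∫ θ in Set.Icc (0:ℝ) 1, (if y c ≤ xcurve C v a B θ c then v c else 0) :=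
      Finset.sum_le_sum fun c _ => aux_theta (v c) (a c) B (y c) (hpos c) hB (ha0 c) (hy.1 c)
    refine le_trans ?_ h1
    rw [Finset.sum_sub_distrib, Finset.sum_sub_distrib, hsum, ← Finset.mul_sum, ← Finset.sum_filter]
    have h2 := hA (Finset.univ.filter fun c => 0 < y c) (by
      rw [← Set.ncard_coe_finset]; simpa using hy.2)
    linarith
  · intro c _
    apply Integrable.of_bound (C := v c)
    · refine (Measurable.ite (measurableSet_le measurable_const ?_) measurable_const measurable_const).aestronglyMeasurable
      exact (measurable_pi_apply c).comp hm
    · refine Filter.Eventually.of_forall fun p => ?_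
      split_ifs <;> simp [abs_of_pos (hpos c), (hpos c).le]

lemma aux_sup (C K : ℕ) (v a : Fin C → ℝ) (A B X Y : ℝ) (hB : 0 < B) (hY : 0 < Y)
    (hpos : ∀ c, 0 < v c) (hsum : ∑ c, v c = 1) (ha0 : ∀ c, 0 ≤ a c) (hav : ∀ c, a c ≤ v c)
    (hX : ∑ c, (v c - a c) ^ 2 / (2 * v c) ≤ B * X)
    (hA : ∀ S : Finset (Fin C), S.card ≤ K → ∑ c ∈ S, a c ≤ A) :
    1 - A - B * Y ≤ ⨆ F : Strat C X, ⨅ G : StratK C K Y, payoff C v F.1 G.1 := by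
  have hd : Measure.dirac (0 : Fin C → ℝ) ∈ StratK C K Y := by
    refine ⟨⟨inferInstance, ?_, ?_⟩, ?_⟩
    · rw [Measure.dirac_apply_of_mem]; simp
    · rw [lintegral_dirac]; simp
    · rw [Measure.dirac_apply_of_mem]; simp [RK]
  haveI : Nonempty (StratK C K Y) := ⟨⟨_, hd⟩⟩
  have hbd : BddAbove (Set.range fun F : Strat C X => ⨅ G : StratK C K Y, payoff C v F.1 G.1) := by
    refine ⟨1, ?_⟩
    rintro _ ⟨F, rfl⟩
    haveI := F.2.1
    have hb : ∀ G : StratK C K Y, ‖payoff C v F.1 G.1‖ ≤ 1 := fun G => by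
      haveI := G.2.1.1
      exact payoff_bound C v hpos hsum F.1 G.1
    refine (ciInf_le ⟨-1, ?_⟩ ⟨_, hd⟩).trans ((le_abs_self _).trans (hb ⟨_, hd⟩))
    rintro _ ⟨G, rfl⟩
    exact (abs_le.1 (hb G)).1
  refine le_trans ?_ (le_ciSup hbd ⟨_, aux_strat C v a B X hB hpos ha0 hav hX⟩)
  exact le_ciInf fun G => aux_payoff C K v a A B Y hB hY hpos hsum ha0 hA G.1 G.2


/-- in the generalized restricted game `RL^K(X,Y;v)`, for any `α ∈ Δ` with
strictly positive coordinates and any `δ ∈ [0,1]`, the max-min value of player X is at least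
`1 − max_{|S| = K} H_S(α,δ)`, where
`H_S(α,δ) = (Σ_{c∈S} v_c)(1−δ) + δ²·(Y/(2X))·max_{c∈S} v_c/α_c`. -/
theorem RLK_maxmin_lower_bound (C : ℕ) (hC : 0 < C) (v : Fin C → ℝ)
    (hpos : ∀ c, 0 < v c) (hsum : ∑ c, v c = 1)
    (X Y : ℝ) (hX : 0 < X) (hY : 0 < Y) (K : ℕ) (hK1 : 1 ≤ K) (hK2 : K ≤ C)
    (α : Fin C → ℝ) (hα : α ∈ stdSimplex ℝ (Fin C)) (hαpos : ∀ c, 0 < α c)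
    (δ : ℝ) (hδ : δ ∈ Set.Icc (0 : ℝ) 1) :
    1 - (⨆ S : {S : Finset (Fin C) // S.card = K},
          ((∑ c ∈ S.1, v c) * (1 - δ) +
            δ ^ 2 * (Y / (2 * X)) * (⨆ c ∈ S.1, v c / α c))) ≤
      ⨆ F : Strat C X, ⨅ G : StratK C K Y, payoff C v F.1 G.1 := by
  obtain ⟨hδ0, hδ1⟩ := hδ
  set f : {S : Finset (Fin C) // S.card = K} → ℝ := fun S => ((∑ c ∈ S.1, v c) * (1 - δ) +
            δ ^ 2 * (Y / (2 * X)) * (⨆ c ∈ S.1, v c / α c)) with hf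
  set H := ⨆ S, f S with hH
  have hfH : ∀ S, f S ≤ H := fun S => le_ciSup (Set.finite_range f).bddAbove S
  have hM : ∀ (S : Finset (Fin C)) c, c ∈ S → v c / α c ≤ ⨆ c ∈ S, v c / α c := by
    intro S c hc
    refine le_trans ?_ (le_ciSup (f := fun c => ⨆ (_ : c ∈ S), v c / α c)
      (Set.finite_range _).bddAbove c)
    simp [hc]
  set r := Y / (2 * X) with hr
  have hr0 : 0 < r := by positivity
  have hHS : ∀ (S : Finset (Fin C)), S.card = K → ∀ c ∈ S,
      (∑ c ∈ S, v c) * (1 - δ) + δ ^ 2 * r * (v c / α c) ≤ H := by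
    intro S hS c hc
    refine le_trans ?_ (hfH ⟨S, hS⟩)
    simp only [hf]
    have := hM S c hc
    gcongr
  rcases hδ0.eq_or_lt with h0 | hδp
  · apply le_of_forall_pos_le_add
    intro ε hε
    have := aux_sup C K v v H (ε / Y) X Y (by positivity) hY hpos hsum (fun c => (hpos c).le)
      (fun c => le_rfl) (by simp; positivity) (by
        intro S hS
        obtain ⟨T, hST, hT⟩ := Finset.exists_superset_card_eq hS (by simpa using hK2)
        have hne : T.Nonempty := by rw [← Finset.card_pos]; omega
        obtain ⟨c, hc⟩ := hne
        have := hHS T hT c hc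
        rw [← h0] at this
        have h3 : ∑ c ∈ S, v c ≤ ∑ c ∈ T, v c :=
          Finset.sum_le_sum_of_subset_of_nonneg hST fun c _ _ => (hpos c).le
        linarith)
    rw [div_mul_cancel₀ _ hY.ne'] at this
    linarith
  -- choose top set
  have hne : (Finset.univ.powersetCard K : Finset (Finset (Fin C))).Nonempty := by
    rw [Finset.powersetCard_nonempty]; simpa using hK2
  obtain ⟨T, hT, hTmax⟩ := Finset.exists_max_image _ (fun S => ∑ c ∈ S, v c) hne
  have hTK : T.card = K := (Finset.mem_powersetCard.1 hT).2
  have hTne : T.Nonempty := by rw [← Finset.card_pos]; omega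
  obtain ⟨κ, hκ, hκmin⟩ := Finset.exists_min_image T v hTne
  set T' := T.erase κ with hT'
  have hTsum : ∑ c ∈ T, v c = ∑ c ∈ T', v c + v κ := (Finset.sum_erase_add T v hκ).symm
  have hT'card : T'.card + 1 = K := by rw [hT', Finset.card_erase_add_one hκ, hTK]
  have hins : ∀ c, c ∉ T' → (insert c T').card = K := fun c hc => by
    rw [Finset.card_insert_of_notMem hc, hT'card]
  have hout : ∀ c, c ∉ T' → v c ≤ v κ := by
    intro c hc
    have := hTmax (insert c T') (Finset.mem_powersetCard.2 ⟨Finset.subset_univ _, hins c hc⟩)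
    simp only [Finset.sum_insert hc] at this
    linarith
  have hin : ∀ c, c ∈ T' → v κ ≤ v c := fun c hc => hκmin c (Finset.mem_of_mem_erase hc)
  set e := 1 - δ with he
  have he0 : 0 ≤ e := by linarith
  have he1 : e ≤ 1 := by linarith
  have hδe : δ = 1 - e := by linarith
  set H' := H - e * ∑ c ∈ T', v c with hH'
  have hDin : ∀ c ∈ T', δ ^ 2 * r * v c ≤ (H' - e * v κ) * α c := by
    intro c hc
    have := hHS T hTK c (Finset.mem_of_mem_erase hc)
    rw [hTsum] at this
    have h2 : δ ^ 2 * r * (v c / α c) ≤ H' - e * v κ := by linarith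
    rwa [← mul_div_assoc, div_le_iff₀ (hαpos c)] at h2
  have hDout : ∀ c, c ∉ T' → δ ^ 2 * r * v c ≤ (H' - e * v c) * α c := by
    intro c hc
    have := hHS (insert c T') (hins c hc) c (Finset.mem_insert_self _ _)
    rw [Finset.sum_insert hc] at this
    have h2 : δ ^ 2 * r * (v c / α c) ≤ H' - e * v c := by linarith
    rwa [← mul_div_assoc, div_le_iff₀ (hαpos c)] at h2
  have hκT' : κ ∉ T' := Finset.notMem_erase κ T
  have hH'κ : 0 < H' - e * v κ := by
    have h1 := hDout κ hκT'
    have h2 : 0 < δ ^ 2 * r * v κ := by have := hpos κ; positivity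
    exact pos_of_mul_pos_left (h2.trans_le h1) (hαpos κ).le
  have hH'0 : 0 < H' := by nlinarith [hpos κ]
  set m := min (2 * H' / (1 + e)) (v κ) with hm
  have hm0 : 0 < m := lt_min (by positivity) (hpos κ)
  have hmκ : m ≤ v κ := min_le_right _ _
  have hmH : (1 + e) * m / 2 ≤ H' := by
    have h1 : m ≤ 2 * H' / (1 + e) := min_le_left _ _
    rw [le_div_iff₀ (by positivity)] at h1
    linarith
  have hgap : 0 < H' - e * m := by nlinarith
  have hem0 : 0 ≤ e * m := by positivity
  have hemκ : e * m ≤ e * v κ := by gcongr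
  set a : Fin C → ℝ := fun c => if c ∈ T' then e * v c else min (e * m) (v c) with ha
  have hain : ∀ c ∈ T', a c = e * v c := fun c hc => by simp [ha, hc]
  have haout : ∀ c, c ∉ T' → a c = min (e * m) (v c) := fun c hc => by simp [ha, hc]
  have ha0 : ∀ c, 0 ≤ a c := by
    intro c
    have := hpos c
    by_cases hc : c ∈ T'
    · rw [hain c hc]; positivity
    · rw [haout c hc]; exact le_min hem0 this.le
  have hav : ∀ c, a c ≤ v c := by
    intro c
    have := hpos c
    by_cases hc : c ∈ T'
    · rw [hain c hc]; nlinarith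
    · rw [haout c hc]; exact min_le_right _ _
  have hterm : ∀ c, r * ((v c - a c) ^ 2 / v c) ≤ (H' - e * m) * α c := by
    intro c
    have hvc := hpos c
    have hαc := hαpos c
    by_cases hc : c ∈ T'
    · have h1 : r * ((v c - a c) ^ 2 / v c) = δ ^ 2 * r * v c := by
        rw [hain c hc, hδe]; field_simp
      rw [h1]
      refine (hDin c hc).trans ?_
      gcongr
    · rcases le_total (v c) (e * m) with h | h
      · rw [haout c hc, min_eq_right h]
        simp
        positivity
      · rw [haout c hc, min_eq_left h]
        have hp := aux_poly m e (v c) H' hm0 he0 he1 h (by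
          rcases le_total (2 * H' / (1 + e)) (v κ) with h3 | h3
          · left
            rw [hm, min_eq_left h3]; field_simp
          · right
            refine ⟨?_, hmH⟩
            rw [hm, min_eq_right h3]; exact hout c hc)
        rw [← hδe] at hp
        have hd := hDout c hc
        have h4 : (δ ^ 2 * v c) * (r * ((v c - e * m) ^ 2 / v c)) ≤
            (δ ^ 2 * v c) * ((H' - e * m) * α c) := by
          have e1 : (δ ^ 2 * v c) * (r * ((v c - e * m) ^ 2 / v c)) * v c
            = (v c - e * m) ^ 2 * (δ ^ 2 * r * v c) := by field_simp
          have e2 := mul_le_mul_of_nonneg_left hd (sq_nonneg (v c - e * m))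
          have e3 := mul_le_mul_of_nonneg_right hp hαc.le
          refine le_of_mul_le_mul_right ?_ hvc
          rw [e1]
          linarith
        exact le_of_mul_le_mul_left h4 (by positivity)
  have hα1 : ∑ c, α c = 1 := hα.2
  have hsumt : r * ∑ c, (v c - a c) ^ 2 / v c ≤ H' - e * m := by
    rw [Finset.mul_sum]
    refine (Finset.sum_le_sum fun c _ => hterm c).trans ?_
    rw [← Finset.mul_sum, hα1, mul_one]
  have hA : ∀ S : Finset (Fin C), S.card ≤ K → ∑ c ∈ S, a c ≤ e * ∑ c ∈ T', v c + e * m := by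
    intro S hS
    have h1 : ∑ c ∈ S, (a c - e * m) ≤ ∑ c ∈ T', (a c - e * m) := by
      have h2 : ∑ c ∈ S, (a c - e * m) ≤ ∑ c ∈ S ∩ T', (a c - e * m) := by
        rw [← Finset.sum_inter_add_sum_sdiff S T']
        have : ∑ c ∈ S \ T', (a c - e * m) ≤ 0 := by
          apply Finset.sum_nonpos
          intro c hc
          rw [haout c (Finset.mem_sdiff.1 hc).2]
          linarith [min_le_left (e * m) (v c)]
        linarith
      refine h2.trans (Finset.sum_le_sum_of_subset_of_nonneg Finset.inter_subset_right ?_)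
      intro c hc _
      rw [hain c hc]
      have := mul_le_mul_of_nonneg_left (hin c hc) he0
      linarith
    simp only [Finset.sum_sub_distrib, Finset.sum_const, nsmul_eq_mul] at h1
    have h3 : ∑ c ∈ T', a c = e * ∑ c ∈ T', v c := by
      rw [Finset.mul_sum]; exact Finset.sum_congr rfl hain
    have h4 : (S.card : ℝ) ≤ T'.card + 1 := by
      have : S.card ≤ T'.card + 1 := by omega
      exact_mod_cast this
    have h5 := mul_le_mul_of_nonneg_right h4 hem0
    linarith
  have := aux_sup C K v a _ ((H' - e * m) / Y) X Y (by positivity) hY hpos hsum ha0 hav (by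
    have h1 : ∑ c, (v c - a c) ^ 2 / (2 * v c) = (∑ c, (v c - a c) ^ 2 / v c) / 2 := by
      rw [Finset.sum_div]
      refine Finset.sum_congr rfl fun c _ => ?_
      have := (hpos c).ne'
      field_simp
    rw [h1]
    rw [hr, div_mul_eq_mul_div, div_le_iff₀ (by positivity)] at hsumt
    rw [div_mul_eq_mul_div, le_div_iff₀ hY]
    linarith) hA
  rw [div_mul_cancel₀ _ hY.ne'] at this
  linarith
end
end
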